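/- Let N ∈ ℕ, p ≥ 1 and q > p satisfy q ≤ (d−1)p/(d−1−p) if p < d−1, q < +∞ if p = d−1, and q = +∞ if p > d−1. Then there exists a constant C = C(N,d,m,p,q) < +∞ such that: for any ball B_R = B_R(x₀) ⊂ ℝ^d, any u_1, …, u_N ∈ W^{1,p}(B_R)^m and any δ ∈ (0, 1/2], there exists η ∈ W_0^{1,∞}(B_R) with 0 ≤ η ≤ 1, η = 1 on B_{(1−δ)R}, ‖∇η‖_{L^∞(B_R)} ≤ 2/(δR), and for all i ∈ {1,…,N}: ‖∇η ⊗ u_i‖_{L^q(B_R)} ≤ C R^{d/q − d/p − 1} δ^{−(1 + 1/p − 1/q)} [ R (∫_{B_R∖B_{(1−δ)R}} |Du_i|^p dx)^{1/p} + (∫_{B_R∖B_{(1−δ)R}} |u_i|^p dx)^{1/p} ], with the convention d/∞ = 1/∞ = 0. -/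

import Mathlib

open MeasureTheory Metric Set Filter
open scoped ENNReal Topology NNReal RealInnerProductSpace

noncomputable section

/-- `ℝ^d` as a Euclidean space. -/
abbrev Euc (d : ℕ) := EuclideanSpace ℝ (Fin d)

/-- The space `ℝ^{m×d}` of `m×d` matrices. -/
abbrev Mat (m d : ℕ) := Fin m → Fin d → ℝ

/-- Frobenius (Euclidean) norm of an `m×d` matrix. -/
def frobNorm {m d : ℕ} (ξ : Mat m d) : ℝ :=
  Real.sqrt (∑ i, ∑ j, ξ i j ^ 2)

/-- `φ ∈ C_c^∞(Ω)^m`: a smooth function with compact support contained in `Ω`. -/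
def IsCcSmooth {d m : ℕ} (Ω : Set (Euc d)) (φ : Euc d → Euc m) : Prop :=
  ContDiff ℝ (⊤ : ℕ∞) φ ∧ HasCompactSupport φ ∧ tsupport φ ⊆ Ω

/-- The (classical) Jacobian matrix of a differentiable map. -/
def smoothJac {d m : ℕ} (φ : Euc d → Euc m) (x : Euc d) : Mat m d :=
  fun i j => fderiv ℝ φ x (EuclideanSpace.single j 1) i

/-- `Du` is the weak Jacobian of `u` on `Ω` (integration by parts against test functions). -/
def IsWeakJacobianOn {d m : ℕ} (Ω : Set (Euc d)) (u : Euc d → Euc m)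
    (Du : Euc d → Mat m d) : Prop :=
  ∀ φ : Euc d → ℝ, ContDiff ℝ (⊤ : ℕ∞) φ → HasCompactSupport φ → tsupport φ ⊆ Ω →
    ∀ (i : Fin m) (j : Fin d),
      ∫ x in Ω, u x i * fderiv ℝ φ x (EuclideanSpace.single j 1) =
        - ∫ x in Ω, Du x i j * φ x

/-- `u ∈ W^{1,p}(Ω)^m` with weak Jacobian `Du`. -/
def MemW1p {d m : ℕ} (Ω : Set (Euc d)) (p : ℝ≥0∞) (u : Euc d → Euc m)
    (Du : Euc d → Mat m d) : Prop :=
  MemLp u p (volume.restrict Ω) ∧ MemLp Du p (volume.restrict Ω) ∧ IsWeakJacobianOn Ω u Du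

/-- Strong convergence `uₙ → v` in `W^{1,p}(Ω)^m` (together with the Jacobians). -/
def TendstoW1p {d m : ℕ} (Ω : Set (Euc d)) (p : ℝ≥0∞)
    (u : ℕ → Euc d → Euc m) (Du : ℕ → Euc d → Mat m d)
    (v : Euc d → Euc m) (Dv : Euc d → Mat m d) : Prop :=
  Tendsto (fun n => eLpNorm (u n - v) p (volume.restrict Ω)) atTop (𝓝 0) ∧
  Tendsto (fun n => eLpNorm (Du n - Dv) p (volume.restrict Ω)) atTop (𝓝 0)

/-- `v ∈ W_0^{1,p}(Ω)^m`, i.e. `v ∈ W^{1,p}` and `v` is a `W^{1,p}`-limit of functions in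
`C_c^∞(Ω)^m`. -/
def MemW1p0 {d m : ℕ} (Ω : Set (Euc d)) (p : ℝ≥0∞) (v : Euc d → Euc m)
    (Dv : Euc d → Mat m d) : Prop :=
  MemW1p Ω p v Dv ∧
  ∃ w : ℕ → Euc d → Euc m, (∀ n, IsCcSmooth Ω (w n)) ∧
    TendstoW1p Ω p w (fun n => smoothJac (w n)) v Dv

/-- `Ω` has Lipschitz boundary: near each boundary point, `Ω` is the subgraph of a Lipschitz
function over a hyperplane. -/
def HasLipschitzBoundary {d : ℕ} (Ω : Set (Euc d)) : Prop :=
  ∀ x ∈ frontier Ω, ∃ (ν : Euc d) (r L : ℝ) (ψ : Euc d → ℝ),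
    ‖ν‖ = 1 ∧ 0 < r ∧ 0 ≤ L ∧ LipschitzWith (Real.toNNReal L) ψ ∧
    ∀ y ∈ ball x r, (y ∈ Ω ↔ ⟪y, ν⟫ < ψ (y - ⟪y, ν⟫ • ν))

/-- Convexity of a `[0,+∞]`-valued function. -/
def ConvexENNReal {m d : ℕ} (f : Mat m d → ℝ≥0∞) : Prop :=
  ∀ ξ η : Mat m d, ∀ t : ℝ, 0 ≤ t → t ≤ 1 →
    f (t • ξ + (1 - t) • η) ≤ ENNReal.ofReal t * f ξ + ENNReal.ofReal (1 - t) * f η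

/-- The convex biconjugate `f**` of a `[0,+∞]`-valued function: the supremum of all affine
minorants of `f`. -/
def biconj {m d : ℕ} (f : Mat m d → ℝ≥0∞) (ξ : Mat m d) : ℝ≥0∞ :=
  ⨆ (L : Mat m d →ₗ[ℝ] ℝ) (c : ℝ) (_ : ∀ η, ENNReal.ofReal (L η + c) ≤ f η),
    ENNReal.ofReal (L ξ + c)

/-- Assumption (a4): the local stability estimate
`W(x,ξ) ≤ C_M (ess inf_{y ∈ B̄_δ(x) ∩ Ω} W(y,·))**(ξ) + α_M(x)` for `|ξ| ≤ M δ^{-d/p}`. -/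
def StabilityEstimate {d m : ℕ} (Ω : Set (Euc d)) (p : ℝ)
    (W : Euc d → Mat m d → ℝ≥0∞) : Prop :=
  ∀ M : ℝ, 1 < M → ∃ (CM δ₀ : ℝ) (αM : Euc d → ℝ≥0∞),
    0 < CM ∧ 0 < δ₀ ∧ (∫⁻ x in Ω, αM x) < ⊤ ∧
    ∀ δ : ℝ, 0 < δ → δ < δ₀ → ∀ x ∈ Ω, ∀ ξ : Mat m d,
      frobNorm ξ ≤ M * δ ^ (-(d : ℝ) / p) →
      W x ξ ≤ ENNReal.ofReal CM *
          biconj (fun η => essInf (fun y => W y η) (volume.restrict (closedBall x δ ∩ Ω))) ξ +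
        αM x

/-- Assumption 1 of the paper (items (a1)–(a4)) for the integrand `W` on `Ω`, with lower
growth exponent `p`. -/
def Assumption1 {d m : ℕ} (Ω : Set (Euc d)) (p : ℝ) (W : Euc d → Mat m d → ℝ≥0∞) : Prop :=
  Measurable (Function.uncurry W) ∧
  (∀ᵐ x ∂volume.restrict Ω, ConvexENNReal (W x) ∧ LowerSemicontinuous (W x)) ∧
  (∀ᵐ x ∂volume.restrict Ω, ∀ ξ, ENNReal.ofReal (frobNorm ξ ^ p) ≤ W x ξ) ∧
  ((p ≤ (d : ℝ) - 1 →
      ∃ (C q : ℝ) (α : Euc d → ℝ≥0∞), 0 < C ∧ p < q ∧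
        (p < (d : ℝ) - 1 → q ≤ ((d : ℝ) - 1) * p / ((d : ℝ) - 1 - p)) ∧
        (∫⁻ x in Ω, α x) < ⊤ ∧
        ∀ᵐ x ∂volume.restrict Ω, ∀ ξ,
          W x ξ ≤ ENNReal.ofReal (C * frobNorm ξ ^ q) + α x) ∧
    ((d : ℝ) - 1 < p →
      ∃ θ : ℝ, 0 < θ ∧
        (∫⁻ x in Ω, ⨆ ξ ∈ {ξ : Mat m d | frobNorm ξ ≤ θ}, W x ξ) < ⊤)) ∧
  StabilityEstimate Ω p W

/-!
Averaging over the radii of the annulus `(1 - δ) R < |x - x₀| < R`, Chebyshev's inequality shows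
that off a set of at most half of the radii every `u_i` restricted to the sphere of radius `r` has
`W^{1,p}` norm controlled by its mean over the annulus. On such a sphere the Sobolev embedding in
dimension `d - 1` bounds `‖u_i‖_{L^q}`, which explains the range of `q`. The cutoff is radial and
descends only along the set `U` of good radii, with constant slope `1 / |U| ≤ 2 / (δ R)`, so
`∇η ⊗ u_i` only sees the good spheres.

Slices of Sobolev functions are reached through mollifications: the Sobolev bound on the slices of
the smooth approximations passes to the limit for almost every radius.
-/

section FirstOrderNorm

variable {E F : Type*} [NormedAddCommGroup E] [NormedSpace ℝ E] [NormedAddCommGroup F]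
  [NormedSpace ℝ F]

/-- The `C¹` norm of `v` at a point, i.e. the integrand of the `W^{1,p}` norm. -/
def firstOrderNorm (v : E → F) (y : E) : ℝ :=
  ‖v y‖ + ‖fderiv ℝ v y‖

lemma firstOrderNorm_nonneg (v : E → F) (y : E) : 0 ≤ firstOrderNorm v y := by
  unfold firstOrderNorm; positivity

lemma continuous_firstOrderNorm {v : E → F} (hv : ContDiff ℝ 1 v) :
    Continuous (firstOrderNorm v) :=
  hv.continuous.norm.add (hv.continuous_fderiv one_ne_zero).norm

variable (E F) in
lemma exists_cutoff_eqOn_unit_ball [FiniteDimensional ℝ E] :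
    ∃ L : ℝ, 0 ≤ L ∧ ∀ v : E → F, ContDiff ℝ 1 v → ∃ w : E → F, ContDiff ℝ 1 w ∧
      EqOn w v (closedBall 0 1) ∧ tsupport w ⊆ closedBall 0 2 ∧
      ∀ y, ‖fderiv ℝ w y‖ ≤ L * firstOrderNorm v y := by
  let χ : ContDiffBump (0 : E) := ⟨1, 2, one_pos, one_lt_two⟩
  have hχ : ContDiff ℝ 1 χ := χ.contDiff
  obtain ⟨L, hL⟩ : ∃ L, ∀ y, ‖fderiv ℝ χ y‖ ≤ L :=
    (hχ.continuous_fderiv one_ne_zero).bounded_above_of_compact_support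
      (χ.hasCompactSupport.fderiv ℝ)
  refine ⟨max 1 L, by positivity, fun v hv ↦ ⟨fun y ↦ χ y • v y, hχ.smul hv, ?_, ?_, ?_⟩⟩
  · intro y hy
    simp [χ.one_of_mem_closedBall hy]
  · exact (tsupport_smul_subset_left χ v).trans χ.tsupport_eq.subset
  · intro y
    rw [fderiv_fun_smul (hχ.differentiable one_ne_zero y) (hv.differentiable one_ne_zero y)]
    calc ‖χ y • fderiv ℝ v y + (fderiv ℝ χ y).smulRight (v y)‖
        ≤ ‖χ y‖ * ‖fderiv ℝ v y‖ + ‖fderiv ℝ χ y‖ * ‖v y‖ := by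
          grw [norm_add_le, norm_smul, ContinuousLinearMap.norm_smulRight_apply]
      _ ≤ max 1 L * ‖fderiv ℝ v y‖ + max 1 L * ‖v y‖ := by
          gcongr
          · rw [Real.norm_of_nonneg χ.nonneg]
            exact χ.le_one.trans (le_max_left _ _)
          · exact (hL y).trans (le_max_right _ _)
      _ = max 1 L * firstOrderNorm v y := by unfold firstOrderNorm; ring

lemma enorm_le_enorm_add_lintegral_segment_firstOrderNorm {v : E → F} (hv : ContDiff ℝ 1 v)
    (x : E) {z : E} (hz : ‖z‖ ≤ 1) :
    ‖v x‖ₑ ≤ ‖firstOrderNorm v (x + z)‖ₑ +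
      ∫⁻ t in Ioc (0 : ℝ) 1, ‖firstOrderNorm v (x + t • z)‖ₑ := by
  have hline (t : ℝ) : HasDerivAt (fun t : ℝ ↦ x + t • z) z t := by
    simpa using ((hasDerivAt_id t).smul_const z).const_add x
  have hderiv (t : ℝ) : deriv (fun t : ℝ ↦ v (x + t • z)) t = fderiv ℝ v (x + t • z) z :=
    ((hv.differentiable one_ne_zero _).hasFDerivAt.comp_hasDerivAt t (hline t)).deriv
  have hv' : ContDiff ℝ 1 fun t : ℝ ↦ v (x + t • z) := by fun_prop
  calc ‖v x‖ₑ = ‖v (x + z) - (v (x + z) - v x)‖ₑ := by rw [sub_sub_cancel]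
    _ ≤ ‖v (x + z)‖ₑ + ‖v (x + z) - v x‖ₑ := enorm_sub_le
    _ ≤ ‖v (x + z)‖ₑ + ∫⁻ t in Ioc (0 : ℝ) 1, ‖deriv (fun t : ℝ ↦ v (x + t • z)) t‖ₑ := by
        gcongr
        simpa [restrict_Ioc_eq_restrict_Icc] using
          enorm_sub_le_lintegral_deriv_of_contDiffOn_Icc hv'.contDiffOn zero_le_one
    _ ≤ _ := by
        gcongr with t <;> rw [enorm_le_iff_norm_le, Real.norm_of_nonneg (firstOrderNorm_nonneg _ _)]
        · exact le_add_of_nonneg_right (norm_nonneg _)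
        · rw [hderiv]
          exact (ContinuousLinearMap.unit_le_opNorm _ _ hz).trans
            (le_add_of_nonneg_left (norm_nonneg _))

end FirstOrderNorm

lemma rpow_one_div_toReal_sub_ne_top {b p q : ℝ≥0∞} (hb : b ≠ ⊤) (hq0 : q ≠ 0) (hqp : q ≤ p) :
    b ^ (1 / q.toReal - 1 / p.toReal) ≠ ⊤ := by
  refine ENNReal.rpow_ne_top_of_nonneg (sub_nonneg.2 ?_) hb
  rcases eq_or_ne p ⊤ with rfl | hp
  · simp
  · exact one_div_le_one_div_of_le (ENNReal.toReal_pos hq0 (ne_top_of_le_ne_top hp hqp))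
      (ENNReal.toReal_mono hp hqp)

lemma lintegral_Ioc_ofReal_rpow_ne_top {r : ℝ} (hr : r < 1) :
    ∫⁻ t in Ioc (0 : ℝ) 1, ENNReal.ofReal (t ^ (-r)) ≠ ⊤ := by
  have h : IntervalIntegrable (fun t : ℝ ↦ t ^ (-r)) volume 0 1 :=
    intervalIntegral.intervalIntegrable_rpow' (by linarith)
  rw [intervalIntegrable_iff_integrableOn_Ioc_of_le zero_le_one] at h
  exact h.lintegral_lt_top.ne

section LocalSobolev

open Module

variable {E F : Type*} [NormedAddCommGroup E] [NormedSpace ℝ E] [MeasurableSpace E]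
  [NormedAddCommGroup F] [NormedSpace ℝ F]

/-- The local Sobolev embedding `W^{1,p}(B₂) → L^q(B₁)` for `F`-valued maps on concentric balls,
tested on `C¹` maps. -/
def HasLocalSobolev (μ : Measure E) (F : Type*) [NormedAddCommGroup F] [NormedSpace ℝ F]
    (p q : ℝ≥0∞) : Prop :=
  ∃ C : ℝ≥0∞, C ≠ ⊤ ∧ ∀ v : E → F, ContDiff ℝ 1 v →
    eLpNorm v q (μ.restrict (closedBall 0 1)) ≤
      C * eLpNorm (firstOrderNorm v) p (μ.restrict (closedBall 0 2))

variable [BorelSpace E] {μ : Measure E} {p p' q q' : ℝ≥0∞}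

variable [FiniteDimensional ℝ E] [μ.IsAddHaarMeasure]

lemma HasLocalSobolev.mono (h : HasLocalSobolev μ F p q) (hp0 : p ≠ 0) (hp : p ≤ p')
    (hq0 : q' ≠ 0) (hq : q' ≤ q) : HasLocalSobolev μ F p' q' := by
  obtain ⟨C, hC, hv⟩ := h
  have hfin (r : ℝ) : μ.restrict (closedBall (0 : E) r) univ ≠ ⊤ := by
    rw [Measure.restrict_apply_univ]; exact measure_closedBall_lt_top.ne
  set b₁ := μ.restrict (closedBall (0 : E) 1) univ ^ (1 / q'.toReal - 1 / q.toReal)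
  set b₂ := μ.restrict (closedBall (0 : E) 2) univ ^ (1 / p.toReal - 1 / p'.toReal)
  refine ⟨C * b₂ * b₁, ENNReal.mul_ne_top (ENNReal.mul_ne_top hC
    (rpow_one_div_toReal_sub_ne_top (hfin 2) hp0 hp))
    (rpow_one_div_toReal_sub_ne_top (hfin 1) hq0 hq), ?_⟩
  intro v hv1
  calc eLpNorm v q' (μ.restrict (closedBall 0 1))
      ≤ eLpNorm v q (μ.restrict (closedBall 0 1)) * b₁ :=
        eLpNorm_le_eLpNorm_mul_rpow_measure_univ hq hv1.continuous.aestronglyMeasurable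
    _ ≤ C * (eLpNorm (firstOrderNorm v) p' (μ.restrict (closedBall 0 2)) * b₂) * b₁ := by
        gcongr
        refine (hv v hv1).trans ?_
        gcongr
        exact eLpNorm_le_eLpNorm_mul_rpow_measure_univ hp
          (continuous_firstOrderNorm hv1).aestronglyMeasurable
    _ = C * b₂ * b₁ * eLpNorm (firstOrderNorm v) p' (μ.restrict (closedBall 0 2)) := by ring

omit [μ.IsAddHaarMeasure] in
lemma HasLocalSobolev.of_compactSupport {K : ℝ≥0∞} (hK : K ≠ ⊤)
    (h : ∀ w : E → F, ContDiff ℝ 1 w → tsupport w ⊆ closedBall 0 2 →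
      eLpNorm w q μ ≤ K * eLpNorm (fderiv ℝ w) p μ) :
    HasLocalSobolev μ F p q := by
  obtain ⟨L, hL0, hL⟩ := exists_cutoff_eqOn_unit_ball E F
  refine ⟨K * ENNReal.ofReal L, ENNReal.mul_ne_top hK ENNReal.ofReal_ne_top, fun v hv ↦ ?_⟩
  obtain ⟨w, hw, hwv, hsupp, hbound⟩ := hL v hv
  have hbound₂ (y : E) :
      ‖fderiv ℝ w y‖ ≤ L * ‖(closedBall 0 2).indicator (firstOrderNorm v) y‖ := by
    by_cases hy : y ∈ closedBall (0 : E) 2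
    · rw [indicator_of_mem hy, Real.norm_of_nonneg (firstOrderNorm_nonneg v y)]
      exact hbound y
    · rw [image_eq_zero_of_notMem_tsupport (fun h ↦ hy (hsupp (tsupport_fderiv_subset ℝ h))),
        norm_zero]
      positivity
  calc eLpNorm v q (μ.restrict (closedBall 0 1))
      = eLpNorm w q (μ.restrict (closedBall 0 1)) :=
        eLpNorm_congr_ae ((ae_restrict_mem measurableSet_closedBall).mono
          fun y hy ↦ (hwv hy).symm)
    _ ≤ eLpNorm w q μ := eLpNorm_mono_measure _ Measure.restrict_le_self
    _ ≤ K * eLpNorm (fderiv ℝ w) p μ := h w hw hsupp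
    _ ≤ K * (ENNReal.ofReal L * eLpNorm (firstOrderNorm v) p (μ.restrict (closedBall 0 2))) := by
        rw [← eLpNorm_indicator_eq_eLpNorm_restrict measurableSet_closedBall]
        gcongr
        exact eLpNorm_le_mul_eLpNorm_of_ae_le_mul (ae_of_all _ hbound₂) p
    _ = _ := (mul_assoc _ _ _).symm

lemma hasLocalSobolev_of_lt_finrank [FiniteDimensional ℝ F] {p q : ℝ≥0} (hp : 1 ≤ p)
    (hpn : p < finrank ℝ E) (hpq : (p : ℝ)⁻¹ - (finrank ℝ E : ℝ)⁻¹ ≤ (q : ℝ)⁻¹) :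
    HasLocalSobolev μ F p q :=
  .of_compactSupport ENNReal.coe_ne_top fun _ hw hsupp ↦
    eLpNorm_le_eLpNorm_fderiv_of_le μ hw (subset_closure.trans hsupp) hp hpn hpq
      isBounded_closedBall

lemma map_add_smul_restrict_closedBall_le {x : E} (hx : x ∈ closedBall 0 1) {t : ℝ}
    (ht : t ∈ Ioc (0 : ℝ) 1) :
    (μ.restrict (closedBall 0 1)).map (fun z ↦ x + t • z) ≤
      ENNReal.ofReal (t ^ finrank ℝ E)⁻¹ • μ.restrict (closedBall 0 2) := by
  have hmeas : Measurable fun z : E ↦ x + t • z := by fun_prop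
  have hmap : μ.map (fun z ↦ x + t • z) = ENNReal.ofReal (t ^ finrank ℝ E)⁻¹ • μ := by
    have hpos : 0 ≤ (t ^ finrank ℝ E)⁻¹ := by have := ht.1; positivity
    calc μ.map (fun z ↦ x + t • z) = (μ.map (t • ·)).map (x + ·) :=
          (Measure.map_map (measurable_const_add x) (measurable_const_smul t)).symm
      _ = ENNReal.ofReal (t ^ finrank ℝ E)⁻¹ • μ := by
          rw [Measure.map_addHaar_smul μ ht.1.ne', Measure.map_smul,
            (measurePreserving_add_left μ x).map_eq, abs_of_nonneg hpos]
  have hmaps : closedBall (0 : E) 1 ⊆ (fun z ↦ x + t • z) ⁻¹' closedBall 0 2 := by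
    intro z hz
    rw [mem_closedBall_zero_iff] at hx hz
    rw [mem_preimage, mem_closedBall_zero_iff]
    calc ‖x + t • z‖ ≤ ‖x‖ + t * ‖z‖ := by
          grw [norm_add_le, norm_smul, Real.norm_of_nonneg ht.1.le]
      _ ≤ 1 + 1 * 1 := by gcongr; exact ht.2
      _ = 2 := by norm_num
  rw [← Measure.restrict_smul, ← hmap, Measure.restrict_map hmeas measurableSet_closedBall]
  exact Measure.map_mono (Measure.restrict_mono hmaps le_rfl) hmeas

lemma lintegral_comp_add_smul_le {g : E → ℝ} (hg : Continuous g) (hp : 1 ≤ p) {x : E}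
    (hx : x ∈ closedBall 0 1) {t : ℝ} (ht : t ∈ Ioc (0 : ℝ) 1) :
    ∫⁻ z in closedBall 0 1, ‖g (x + t • z)‖ₑ ∂μ ≤
      ENNReal.ofReal (t ^ (-(finrank ℝ E / p.toReal))) *
        (eLpNorm g p (μ.restrict (closedBall 0 2)) *
          μ.restrict (closedBall 0 1) univ ^ (1 / (1 : ℝ≥0∞).toReal - 1 / p.toReal)) := by
  have hmeas : Measurable fun z : E ↦ x + t • z := by fun_prop
  have hscale : ENNReal.ofReal (t ^ finrank ℝ E)⁻¹ ^ (1 / p).toReal =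
      ENNReal.ofReal (t ^ (-(finrank ℝ E / p.toReal))) := by
    have := ht.1
    rw [ENNReal.ofReal_rpow_of_nonneg (by positivity) (by positivity), ← Real.rpow_natCast,
      ← Real.rpow_neg ht.1.le, ← Real.rpow_mul ht.1.le]
    congr 2
    simp [div_eq_mul_inv]
  have hc : ENNReal.ofReal (t ^ finrank ℝ E)⁻¹ ≠ 0 := by
    have := ht.1
    simp only [ne_eq, ENNReal.ofReal_eq_zero, inv_nonpos, not_le]
    positivity
  rw [← eLpNorm_one_eq_lintegral_enorm (f := fun z ↦ g (x + t • z))]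
  calc eLpNorm (fun z ↦ g (x + t • z)) 1 (μ.restrict (closedBall 0 1))
      ≤ eLpNorm (fun z ↦ g (x + t • z)) p (μ.restrict (closedBall 0 1)) *
        μ.restrict (closedBall 0 1) univ ^ (1 / (1 : ℝ≥0∞).toReal - 1 / p.toReal) :=
        eLpNorm_le_eLpNorm_mul_rpow_measure_univ hp
          (hg.comp (by fun_prop)).aestronglyMeasurable
    _ = eLpNorm g p ((μ.restrict (closedBall 0 1)).map fun z ↦ x + t • z) *
        μ.restrict (closedBall 0 1) univ ^ (1 / (1 : ℝ≥0∞).toReal - 1 / p.toReal) := by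
        rw [eLpNorm_map_measure hg.aestronglyMeasurable hmeas.aemeasurable]; rfl
    _ ≤ _ := by
        rw [← mul_assoc, ← hscale, ← smul_eq_mul (ENNReal.ofReal _ ^ _),
          ← eLpNorm_smul_measure_of_ne_zero hc]
        gcongr
        exact map_add_smul_restrict_closedBall_le hx ht

lemma measure_closedBall_mul_enorm_le (hp : 1 ≤ p) {v : E → F} (hv : ContDiff ℝ 1 v) {x : E}
    (hx : x ∈ closedBall (0 : E) 1) :
    μ (closedBall 0 1) * ‖v x‖ₑ ≤
      (1 + ∫⁻ t in Ioc (0 : ℝ) 1, ENNReal.ofReal (t ^ (-(finrank ℝ E / p.toReal)))) *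
        (eLpNorm (firstOrderNorm v) p (μ.restrict (closedBall 0 2)) *
          μ.restrict (closedBall 0 1) univ ^ (1 / (1 : ℝ≥0∞).toReal - 1 / p.toReal)) := by
  have hw := continuous_firstOrderNorm hv
  have hwm := hw.measurable
  have hsegment := fun t ht ↦ lintegral_comp_add_smul_le (μ := μ) (t := t) hw hp hx ht
  set c := eLpNorm (firstOrderNorm v) p (μ.restrict (closedBall 0 2)) *
    μ.restrict (closedBall 0 1) univ ^ (1 / (1 : ℝ≥0∞).toReal - 1 / p.toReal)
  calc μ (closedBall 0 1) * ‖v x‖ₑ = ∫⁻ _ in closedBall 0 1, ‖v x‖ₑ ∂μ := by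
        rw [setLIntegral_const, mul_comm]
    _ ≤ ∫⁻ z in closedBall 0 1, (‖firstOrderNorm v (x + (1 : ℝ) • z)‖ₑ +
          ∫⁻ t in Ioc (0 : ℝ) 1, ‖firstOrderNorm v (x + t • z)‖ₑ) ∂μ :=
        setLIntegral_mono' measurableSet_closedBall fun z hz ↦ by
          rw [one_smul]
          exact enorm_le_enorm_add_lintegral_segment_firstOrderNorm hv x
            (mem_closedBall_zero_iff.1 hz)
    _ = (∫⁻ z in closedBall 0 1, ‖firstOrderNorm v (x + (1 : ℝ) • z)‖ₑ ∂μ) +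
          ∫⁻ t in Ioc (0 : ℝ) 1, ∫⁻ z in closedBall 0 1, ‖firstOrderNorm v (x + t • z)‖ₑ ∂μ := by
        rw [lintegral_add_left (by fun_prop), lintegral_lintegral_swap (by fun_prop)]
    _ ≤ c + ∫⁻ t in Ioc (0 : ℝ) 1, ENNReal.ofReal (t ^ (-(finrank ℝ E / p.toReal))) * c :=
        add_le_add ((hsegment 1 ⟨one_pos, le_rfl⟩).trans_eq (by simp))
          (setLIntegral_mono' measurableSet_Ioc hsegment)
    _ = _ := by rw [lintegral_mul_const _ (by fun_prop), add_mul, one_mul]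

lemma hasLocalSobolev_top_of_finrank_lt (hp : 1 ≤ p) (hn : (finrank ℝ E : ℝ≥0∞) < p) :
    HasLocalSobolev μ F p ⊤ := by
  set I := ∫⁻ t in Ioc (0 : ℝ) 1, ENNReal.ofReal (t ^ (-(finrank ℝ E / p.toReal)))
  have hI : I ≠ ⊤ := by
    refine lintegral_Ioc_ofReal_rpow_ne_top ?_
    rcases eq_or_ne p ⊤ with rfl | hpt
    · simp
    · rw [div_lt_one (ENNReal.toReal_pos (by positivity) hpt)]
      simpa using (ENNReal.toReal_lt_toReal (by simp) hpt).2 hn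
  have hball0 : μ (closedBall 0 1) ≠ 0 := (measure_closedBall_pos μ _ one_pos).ne'
  have hball : μ (closedBall 0 1) ≠ ⊤ := measure_closedBall_lt_top.ne
  set c := μ.restrict (closedBall 0 1) univ ^ (1 / (1 : ℝ≥0∞).toReal - 1 / p.toReal)
  have hc : c ≠ ⊤ := rpow_one_div_toReal_sub_ne_top (by simpa using hball) one_ne_zero hp
  refine ⟨(μ (closedBall 0 1))⁻¹ * ((1 + I) * c), by finiteness, fun v hv ↦ ?_⟩
  refine eLpNormEssSup_le_of_ae_enorm_bound
    ((ae_restrict_mem measurableSet_closedBall).mono fun x hx ↦ ?_)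
  calc ‖v x‖ₑ = (μ (closedBall 0 1))⁻¹ * (μ (closedBall 0 1) * ‖v x‖ₑ) := by
        rw [← mul_assoc, ENNReal.inv_mul_cancel hball0 hball, one_mul]
    _ ≤ _ := by grw [measure_closedBall_mul_enorm_le hp hv hx]
    _ = _ := by ring

lemma hasLocalSobolev_one_top (F : Type*) [NormedAddCommGroup F] [NormedSpace ℝ F] :
    HasLocalSobolev (volume : Measure (Fin 1 → ℝ)) F 1 ⊤ := by
  refine .of_compactSupport ENNReal.one_ne_top fun w hw hsupp ↦ ?_
  rw [one_mul, eLpNorm_one_eq_lintegral_enorm]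
  refine eLpNormEssSup_le_of_ae_enorm_bound (ae_of_all _ fun y ↦ ?_)
  let e : ℝ ≃L[ℝ] (Fin 1 → ℝ) := (ContinuousLinearEquiv.funUnique (Fin 1) ℝ ℝ).symm
  have hderiv (t : ℝ) : ‖deriv (w ∘ e) t‖ₑ ≤ ‖fderiv ℝ w (e t)‖ₑ := by
    have he : ‖e 1‖ ≤ 1 := (pi_norm_le_iff_of_nonneg zero_le_one).2 fun _ ↦ norm_one.le
    have hcomp : deriv (w ∘ e) t = fderiv ℝ w (e t) (e 1) :=
      ((hw.differentiable one_ne_zero (e t)).hasFDerivAt.comp_hasDerivAt t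
        (e : ℝ →L[ℝ] (Fin 1 → ℝ)).hasDerivAt).deriv
    rw [hcomp, enorm_le_iff_norm_le]
    exact (fderiv ℝ w (e t)).unit_le_opNorm _ he
  have hcomp : HasCompactSupport (w ∘ e) :=
    (HasCompactSupport.of_support_subset_isCompact (isCompact_closedBall 0 2)
      (subset_closure.trans hsupp)).comp_homeomorph e.toHomeomorph
  calc ‖w y‖ₑ = ‖(w ∘ e) (e.symm y)‖ₑ := by simp
    _ ≤ ∫⁻ t, ‖deriv (w ∘ e) t‖ₑ :=
        (hcomp.enorm_le_lintegral_Ici_deriv (hw.comp e.contDiff) _).trans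
          (setLIntegral_le_lintegral _ _)
    _ ≤ ∫⁻ t, ‖fderiv ℝ w (e t)‖ₑ := lintegral_mono hderiv
    _ = ∫⁻ y, ‖fderiv ℝ w y‖ₑ :=
        (volume_preserving_funUnique (Fin 1) ℝ).symm.lintegral_comp
          (hw.continuous_fderiv one_ne_zero).enorm.measurable

lemma hasLocalSobolev_finrank [FiniteDimensional ℝ F] (hn : 1 < finrank ℝ E) {q : ℝ≥0}
    (hq : q ≠ 0) :
    HasLocalSobolev μ F (finrank ℝ E) q := by
  set p' : ℝ≥0 := max 1 ((finrank ℝ E : ℝ≥0)⁻¹ + q⁻¹)⁻¹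
  have hp'n : p' < finrank ℝ E := by
    refine max_lt (by exact_mod_cast hn) (inv_lt_of_inv_lt₀ (by positivity) ?_)
    exact lt_add_of_pos_right _ (by positivity)
  have hp'q : (p' : ℝ)⁻¹ - (finrank ℝ E : ℝ)⁻¹ ≤ (q : ℝ)⁻¹ := by
    rw [sub_le_iff_le_add']
    refine inv_le_of_inv_le₀ (by positivity) ?_
    exact_mod_cast le_max_right 1 ((finrank ℝ E : ℝ≥0)⁻¹ + q⁻¹)⁻¹
  exact (hasLocalSobolev_of_lt_finrank (le_max_left _ _) hp'n hp'q).mono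
    (by simp) (by exact_mod_cast hp'n.le) (by simpa using hq) le_rfl

theorem hasLocalSobolev_pi [FiniteDimensional ℝ F] {n : ℕ} {p : ℝ} {q : ℝ≥0∞} (hp : 1 ≤ p)
    (hq : q ≠ 0) (hsub : p < n → q ≤ ENNReal.ofReal (n * p / (n - p))) (hcrit : p = n → q < ⊤) :
    HasLocalSobolev (volume : Measure (Fin n → ℝ)) F (ENNReal.ofReal p) q := by
  rcases lt_trichotomy p n with hlt | rfl | hgt
  · have hq' : q ≠ ⊤ := ne_top_of_le_ne_top ENNReal.ofReal_ne_top (hsub hlt)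
    lift q to ℝ≥0 using hq'
    have hqr : (q : ℝ) ≤ n * p / (n - p) := by
      have := ENNReal.toReal_mono ENNReal.ofReal_ne_top (hsub hlt)
      rwa [ENNReal.coe_toReal, ENNReal.toReal_ofReal] at this
      have := sub_pos.2 hlt
      positivity
    have hq0 : (0 : ℝ) < q := by
      rw [NNReal.coe_pos, pos_iff_ne_zero]
      exact_mod_cast hq
    refine hasLocalSobolev_of_lt_finrank (p := p.toNNReal) (by simpa using hp)
      ((Real.toNNReal_lt_iff_lt_coe (by linarith)).2 (by simpa using hlt)) ?_
    have hn : (0 : ℝ) < n := by linarith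
    have := sub_pos.2 hlt
    rw [Real.coe_toNNReal p (by linarith), Module.finrank_fin_fun,
      show p⁻¹ - (n : ℝ)⁻¹ = (n * p / (n - p))⁻¹ by field_simp]
    gcongr
  · lift q to ℝ≥0 using (hcrit rfl).ne
    rw [ENNReal.ofReal_natCast]
    rcases (Nat.one_le_cast.1 hp).eq_or_lt' with rfl | hn
    · simpa using (hasLocalSobolev_one_top F).mono one_ne_zero le_rfl hq le_top
    · simpa using hasLocalSobolev_finrank (F := F) (μ := (volume : Measure (Fin n → ℝ)))
        (by simpa using hn) (by simpa using hq)
  · refine (hasLocalSobolev_top_of_finrank_lt (by simpa using hp) ?_).mono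
      (by simp; linarith) le_rfl hq le_top
    rw [Module.finrank_fin_fun, ← ENNReal.ofReal_natCast]
    exact (ENNReal.ofReal_lt_ofReal_iff (by linarith)).2 hgt

end LocalSobolev

section PolarCharts

lemma norm_le_sum_norm_coord {ι : Type*} [Fintype ι] (v : EuclideanSpace ℝ ι) :
    ‖v‖ ≤ ∑ i, ‖v i‖ := by
  rw [EuclideanSpace.norm_eq]
  exact Real.sqrt_le_iff.2 ⟨by positivity,
    Finset.sum_sq_le_sq_sum_of_nonneg fun i _ ↦ norm_nonneg _⟩

variable {n : ℕ}

/-- The point of `ℝ^{n+1}` whose `j`-th coordinate is `a` and whose other coordinates are `y`. -/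
def insertCoord (j : Fin (n + 1)) (a : ℝ) (y : Fin n → ℝ) : Euc (n + 1) :=
  WithLp.toLp 2 (Fin.insertNth j a y : Fin (n + 1) → ℝ)

@[simp]
lemma insertCoord_self (j : Fin (n + 1)) (a : ℝ) (y : Fin n → ℝ) : insertCoord j a y j = a := by
  simp [insertCoord]

@[simp]
lemma insertCoord_succAbove (j : Fin (n + 1)) (a : ℝ) (y : Fin n → ℝ) (i : Fin n) :
    insertCoord j a y (j.succAbove i) = y i := by
  simp [insertCoord]

lemma insertCoord_mul_smul (j : Fin (n + 1)) (a t : ℝ) (y : Fin n → ℝ) :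
    insertCoord j (a * t) (t • y) = t • insertCoord j a y := by
  ext i
  refine Fin.succAboveCases j ?_ (fun i ↦ ?_) i <;> simp [mul_comm]

lemma contDiff_insertCoord (j : Fin (n + 1)) (a : ℝ) : ContDiff ℝ 1 (insertCoord j a) := by
  refine contDiff_euclidean.2 fun i ↦ Fin.succAboveCases j ?_ (fun i ↦ ?_) i
  · simpa only [insertCoord_self] using contDiff_const
  · simpa only [insertCoord_succAbove] using contDiff_apply ℝ ℝ i

lemma measurePreserving_insertCoord (j : Fin (n + 1)) :
    MeasurePreserving (fun z : ℝ × (Fin n → ℝ) ↦ insertCoord j z.1 z.2) (volume.prod volume)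
      volume :=
  (PiLp.volume_preserving_toLp _).comp (volume_preserving_piFinSuccAbove (fun _ ↦ ℝ) j).symm

/-- The faces of the cube `[-1, 1]^{n+1}`: the choice of a coordinate and of a sign. -/
abbrev CubeFace (n : ℕ) := Fin (n + 1) × ℤˣ

/-- The sign of a face, as a real number. -/
def CubeFace.sign (k : CubeFace n) : ℝ := (k.2 : ℤ)

lemma CubeFace.sign_eq_or (k : CubeFace n) : k.sign = 1 ∨ k.sign = -1 := by
  rcases Int.units_eq_one_or k.2 with h | h <;> simp [CubeFace.sign, h]

lemma CubeFace.sign_mul_self (k : CubeFace n) : k.sign * k.sign = 1 := by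
  rcases k.sign_eq_or with h | h <;> simp [h]

lemma CubeFace.abs_sign (k : CubeFace n) : |k.sign| = 1 := by
  rcases k.sign_eq_or with h | h <;> simp [h]

lemma CubeFace.measurePreserving_sign_mul (k : CubeFace n) :
    MeasurePreserving (fun t : ℝ ↦ k.sign * t) volume volume := by
  rcases k.sign_eq_or with h | h
  · simp only [h, one_mul]
    exact MeasurePreserving.id _
  · simpa only [h, neg_one_mul] using Measure.measurePreserving_neg (volume : Measure ℝ)

/-- The affine parametrization of the hyperplane spanned by the face `k` of the unit cube. -/
def facePoint (k : CubeFace n) (y : Fin n → ℝ) : Euc (n + 1) :=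
  insertCoord k.1 k.sign y

lemma one_le_norm_facePoint (k : CubeFace n) (y : Fin n → ℝ) : 1 ≤ ‖facePoint k y‖ := by
  have h := PiLp.norm_apply_le (facePoint k y) k.1
  rwa [facePoint, insertCoord_self, Real.norm_eq_abs, k.abs_sign] at h

lemma facePoint_ne_zero (k : CubeFace n) (y : Fin n → ℝ) : facePoint k y ≠ 0 :=
  norm_pos_iff.1 (one_pos.trans_le (one_le_norm_facePoint k y))

lemma norm_facePoint_le (k : CubeFace n) (y : Fin n → ℝ) : ‖facePoint k y‖ ≤ n * ‖y‖ + 1 := by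
  calc ‖facePoint k y‖ ≤ ∑ i, ‖facePoint k y i‖ := norm_le_sum_norm_coord _
    _ = 1 + ∑ i, ‖y i‖ := by
        rw [Fin.sum_univ_succAbove _ k.1]
        simp [facePoint, k.abs_sign]
    _ ≤ 1 + ∑ _ : Fin n, ‖y‖ := by gcongr with i; exact norm_le_pi_norm y i
    _ = n * ‖y‖ + 1 := by simp [add_comm]

/-- The central projection of the face `k` to the unit sphere. -/
def sphereChart (k : CubeFace n) (y : Fin n → ℝ) : Euc (n + 1) :=
  ‖facePoint k y‖⁻¹ • facePoint k y

lemma norm_sphereChart (k : CubeFace n) (y : Fin n → ℝ) : ‖sphereChart k y‖ = 1 := by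
  rw [sphereChart, norm_smul, norm_inv, norm_norm,
    inv_mul_cancel₀ (norm_ne_zero_iff.2 (facePoint_ne_zero k y))]

lemma contDiff_sphereChart (k : CubeFace n) : ContDiff ℝ 1 (sphereChart k) :=
  have h := contDiff_insertCoord k.1 k.sign
  ((h.norm ℝ (facePoint_ne_zero k)).inv
    fun y ↦ norm_ne_zero_iff.2 (facePoint_ne_zero k y)).smul h

/-- Polar coordinates centred at `x₀`, with the sphere parametrized by the chart of the face `k`. -/
def polarChart (k : CubeFace n) (x₀ : Euc (n + 1)) (z : ℝ × (Fin n → ℝ)) : Euc (n + 1) :=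
  x₀ + z.1 • sphereChart k z.2

lemma continuous_polarChart (k : CubeFace n) (x₀ : Euc (n + 1)) : Continuous (polarChart k x₀) := by
  have := (contDiff_sphereChart k).continuous
  unfold polarChart
  fun_prop

lemma dist_polarChart (k : CubeFace n) (x₀ : Euc (n + 1)) (z : ℝ × (Fin n → ℝ)) :
    dist (polarChart k x₀ z) x₀ = |z.1| := by
  simp [polarChart, norm_smul, norm_sphereChart]

/-- The radial part `r^n dr` of Lebesgue measure on `ℝ^{n+1}` in polar coordinates. -/
def radialMeasure (n : ℕ) : Measure ℝ :=
  (volume.restrict (Ioi 0)).withDensity fun r ↦ ENNReal.ofReal (r ^ n)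

instance : SFinite (radialMeasure n) := by unfold radialMeasure; infer_instance

lemma ae_radialMeasure_pos : ∀ᵐ r ∂radialMeasure n, 0 < r :=
  (withDensity_absolutelyContinuous _ _).ae_le (ae_restrict_mem measurableSet_Ioi)

lemma lintegral_radialMeasure (n : ℕ) {G : ℝ → ℝ≥0∞} (hG : Measurable G) :
    ∫⁻ r, G r ∂radialMeasure n = ∫⁻ r in Ioi 0, ENNReal.ofReal (r ^ n) * G r :=
  lintegral_withDensity_eq_lintegral_mul _ (by fun_prop) hG

lemma lintegral_eq_mul_lintegral_comp_smul {E : Type*} [NormedAddCommGroup E] [NormedSpace ℝ E]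
    [FiniteDimensional ℝ E] [MeasurableSpace E] [BorelSpace E] (μ : Measure E) [μ.IsAddHaarMeasure]
    {t : ℝ} (ht : 0 < t) (G : E → ℝ≥0∞) :
    ∫⁻ y, G y ∂μ = ENNReal.ofReal (t ^ Module.finrank ℝ E) * ∫⁻ y, G (t • y) ∂μ := by
  have hmap : ∫⁻ y, G y ∂μ.map (t • ·) = ∫⁻ y, G (t • y) ∂μ :=
    lintegral_map_equiv G (Homeomorph.smulOfNeZero t ht.ne').toMeasurableEquiv
  have hpos : 0 ≤ (t ^ Module.finrank ℝ E)⁻¹ := by positivity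
  rw [← hmap, Measure.map_addHaar_smul μ ht.ne', lintegral_smul_measure, smul_eq_mul, ← mul_assoc,
    ← ENNReal.ofReal_mul (by positivity), abs_of_nonneg hpos, mul_inv_cancel₀ (by positivity),
    ENNReal.ofReal_one, one_mul]

lemma lintegral_radialMeasure_eq_mul_lintegral_comp_mul {c : ℝ} (hc : 0 < c) {G : ℝ → ℝ≥0∞}
    (hG : Measurable G) :
    ∫⁻ t, G t ∂radialMeasure n =
      ENNReal.ofReal (c ^ (n + 1)) * ∫⁻ r, G (c * r) ∂radialMeasure n := by
  rw [lintegral_radialMeasure n hG, lintegral_radialMeasure n (by fun_prop),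
    ← lintegral_const_mul' _ _ ENNReal.ofReal_ne_top, ← lintegral_indicator measurableSet_Ioi,
    lintegral_eq_mul_lintegral_comp_smul volume hc,
    ← lintegral_const_mul' _ _ ENNReal.ofReal_ne_top, ← lintegral_indicator measurableSet_Ioi]
  congr 1 with r
  by_cases hr : 0 < r
  · rw [indicator_of_mem (show c • r ∈ Ioi 0 from mul_pos hc hr), indicator_of_mem (mem_Ioi.2 hr),
      Module.finrank_self, pow_one, smul_eq_mul, mul_pow, ENNReal.ofReal_mul (by positivity),
      pow_succ', ENNReal.ofReal_mul hc.le]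
    ring
  · rw [indicator_of_notMem (show c • r ∉ Ioi 0 from fun h ↦ hr (pos_of_mul_pos_right h hc.le)),
      indicator_of_notMem (by simpa using hr), mul_zero]

/-- The open half space seen from `x₀` in the direction of the face `k`. -/
def faceHalfspace (k : CubeFace n) (x₀ : Euc (n + 1)) : Set (Euc (n + 1)) :=
  {x | 0 < k.sign * (x - x₀) k.1}

lemma measurableSet_faceHalfspace (k : CubeFace n) (x₀ : Euc (n + 1)) :
    MeasurableSet (faceHalfspace k x₀) :=
  measurableSet_lt measurable_const (by fun_prop)

lemma setLIntegral_faceHalfspace (k : CubeFace n) (x₀ : Euc (n + 1)) {G : Euc (n + 1) → ℝ≥0∞}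
    (hG : Measurable G) :
    ∫⁻ x in faceHalfspace k x₀, G x =
      ∫⁻ t in Ioi 0, ∫⁻ w, G (x₀ + insertCoord k.1 (k.sign * t) w) := by
  have hmp := (measurePreserving_add_left volume x₀).comp (measurePreserving_insertCoord k.1)
  have hpre : (fun z : ℝ × (Fin n → ℝ) ↦ x₀ + insertCoord k.1 z.1 z.2) ⁻¹' faceHalfspace k x₀ =
      ((k.sign * ·) ⁻¹' Ioi 0) ×ˢ univ := by
    ext z; simp [faceHalfspace]
  have hm : Measurable fun z : ℝ × (Fin n → ℝ) ↦ G (x₀ + insertCoord k.1 z.1 z.2) :=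
    hG.comp hmp.measurable
  have hmG : Measurable fun a ↦ ∫⁻ w, G (x₀ + insertCoord k.1 a w) := hm.lintegral_prod_right'
  have hflip := k.measurePreserving_sign_mul.setLIntegral_comp_preimage
    (f := fun t ↦ ∫⁻ w, G (x₀ + insertCoord k.1 (k.sign * t) w)) (measurableSet_Ioi (a := 0))
    (hmG.comp (measurable_const_mul k.sign))
  simp only [← mul_assoc, k.sign_mul_self, one_mul] at hflip
  rw [← hflip, ← hmp.setLIntegral_comp_preimage (measurableSet_faceHalfspace k x₀) hG]
  simp only [Function.comp_def]
  rw [hpre, ← Measure.prod_restrict, Measure.restrict_univ, lintegral_prod _ hm.aemeasurable]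

/-- The density of Lebesgue measure in the sphere chart of the face `k`. -/
def sphereDensity (k : CubeFace n) (y : Fin n → ℝ) : ℝ≥0∞ :=
  ENNReal.ofReal (‖facePoint k y‖⁻¹ ^ (n + 1))

lemma measurable_sphereDensity (k : CubeFace n) : Measurable (sphereDensity k) := by
  have := (contDiff_insertCoord k.1 k.sign).continuous.measurable
  unfold sphereDensity facePoint
  fun_prop

lemma sphereDensity_le_one (k : CubeFace n) (y : Fin n → ℝ) : sphereDensity k y ≤ 1 :=
  ENNReal.ofReal_le_one.2 (pow_le_one₀ (by positivity)
    (inv_le_one_of_one_le₀ (one_le_norm_facePoint k y)))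

theorem map_polarChart_eq_restrict (k : CubeFace n) (x₀ : Euc (n + 1)) :
    ((radialMeasure n).prod (volume.withDensity (sphereDensity k))).map (polarChart k x₀) =
      volume.restrict (faceHalfspace k x₀) := by
  have hΦ := (continuous_polarChart k x₀).measurable
  have hface : Measurable (facePoint k) := (contDiff_insertCoord k.1 k.sign).continuous.measurable
  refine Measure.ext_of_lintegral _ fun G hG ↦ ?_
  have hGΦ : Measurable fun z ↦ G (polarChart k x₀ z) := hG.comp hΦ
  have hGface : Measurable fun z : ℝ × (Fin n → ℝ) ↦ G (x₀ + z.1 • facePoint k z.2) :=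
    hG.comp (by fun_prop)
  have hslice (t : ℝ) (ht : t ∈ Ioi 0) : ∫⁻ w, G (x₀ + insertCoord k.1 (k.sign * t) w) =
      ENNReal.ofReal (t ^ n) * ∫⁻ y, G (x₀ + t • facePoint k y) := by
    rw [lintegral_eq_mul_lintegral_comp_smul volume ht, Module.finrank_fin_fun]
    simp only [insertCoord_mul_smul, facePoint]
  have hray (y : Fin n → ℝ) : ∫⁻ t, G (x₀ + t • facePoint k y) ∂radialMeasure n =
      sphereDensity k y * ∫⁻ r, G (polarChart k x₀ (r, y)) ∂radialMeasure n := by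
    have := facePoint_ne_zero k y
    rw [lintegral_radialMeasure_eq_mul_lintegral_comp_mul
      (by positivity : 0 < ‖facePoint k y‖⁻¹) (by fun_prop)]
    simp only [polarChart, sphereChart, smul_smul, mul_comm, sphereDensity]
  calc ∫⁻ x, G x ∂((radialMeasure n).prod (volume.withDensity (sphereDensity k))).map
        (polarChart k x₀)
      = ∫⁻ y, ∫⁻ r, G (polarChart k x₀ (r, y)) ∂radialMeasure n
          ∂volume.withDensity (sphereDensity k) := by
        rw [lintegral_map hG hΦ, lintegral_prod_symm _ hGΦ.aemeasurable]
    _ = ∫⁻ y, ∫⁻ t, G (x₀ + t • facePoint k y) ∂radialMeasure n := by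
        rw [lintegral_withDensity_eq_lintegral_mul _ (measurable_sphereDensity k)
          hGΦ.lintegral_prod_left']
        simp only [hray, Pi.mul_apply]
    _ = ∫⁻ t, ∫⁻ y, G (x₀ + t • facePoint k y) ∂volume ∂radialMeasure n :=
        lintegral_lintegral_swap (hGface.comp measurable_swap).aemeasurable
    _ = ∫⁻ x in faceHalfspace k x₀, G x := by
        rw [lintegral_radialMeasure n hGface.lintegral_prod_right',
          setLIntegral_faceHalfspace k x₀ hG]
        exact (setLIntegral_congr_fun measurableSet_Ioi hslice).symm

end PolarCharts

section Shells

/-- The spherical shell of all points whose distance to `x₀` belongs to `U`. -/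
def shell {d : ℕ} (x₀ : Euc d) (U : Set ℝ) : Set (Euc d) := (dist · x₀) ⁻¹' U

lemma measurableSet_shell {d : ℕ} (x₀ : Euc d) {U : Set ℝ} (hU : MeasurableSet U) :
    MeasurableSet (shell x₀ U) :=
  (measurable_dist.comp (measurable_id.prodMk measurable_const)) hU

lemma isOpen_shell {d : ℕ} (x₀ : Euc d) {U : Set ℝ} (hU : IsOpen U) : IsOpen (shell x₀ U) :=
  hU.preimage (continuous_id.dist continuous_const)

variable {n : ℕ}

lemma restrict_shell_map_polarChart (k : CubeFace n) (x₀ : Euc (n + 1))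
    (ν : Measure (Fin n → ℝ)) [SFinite ν] {U : Set ℝ} (hU : MeasurableSet U) :
    (((radialMeasure n).prod ν).map (polarChart k x₀)).restrict (shell x₀ U) =
      (((radialMeasure n).restrict U).prod ν).map (polarChart k x₀) := by
  have hpre : polarChart k x₀ ⁻¹' shell x₀ U =ᵐ[(radialMeasure n).prod ν] U ×ˢ univ := by
    filter_upwards [Measure.quasiMeasurePreserving_fst.ae (ae_radialMeasure_pos (n := n))]
      with z hz
    have : z ∈ polarChart k x₀ ⁻¹' shell x₀ U ↔ z ∈ U ×ˢ univ := by
      simp [shell, dist_polarChart, abs_of_pos hz]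
    exact propext this
  rw [Measure.restrict_map (continuous_polarChart k x₀).measurable (measurableSet_shell x₀ hU),
    Measure.restrict_congr_set hpre, ← Measure.prod_restrict, Measure.restrict_univ]

lemma restrict_closedBall_le_withDensity_sphereDensity (k : CubeFace n) {ρ : ℝ} (hρ : 0 ≤ ρ) :
    volume.restrict (closedBall 0 ρ) ≤
      ENNReal.ofReal ((n * ρ + 1) ^ (n + 1)) • volume.withDensity (sphereDensity k) := by
  have hdens (y : Fin n → ℝ) (hy : y ∈ closedBall 0 ρ) :
      1 ≤ ENNReal.ofReal ((n * ρ + 1) ^ (n + 1)) * sphereDensity k y := by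
    have hpos := one_pos.trans_le (one_le_norm_facePoint k y)
    have hle : ‖facePoint k y‖ ≤ n * ρ + 1 :=
      (norm_facePoint_le k y).trans (by gcongr; exact mem_closedBall_zero_iff.1 hy)
    rw [sphereDensity, ← ENNReal.ofReal_mul (by positivity), ← mul_pow, ENNReal.one_le_ofReal]
    exact one_le_pow₀ (by rwa [← div_eq_mul_inv, one_le_div hpos])
  rw [← withDensity_smul _ (measurable_sphereDensity k), ← withDensity_indicator_one
    measurableSet_closedBall]
  refine withDensity_mono (Eventually.of_forall fun y ↦ ?_)
  by_cases hy : y ∈ closedBall 0 ρ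
  · simpa [hy] using hdens y hy
  · simp [hy]

theorem map_polarChart_prod_restrict_closedBall_le (k : CubeFace n) (x₀ : Euc (n + 1)) {ρ : ℝ}
    (hρ : 0 ≤ ρ) {U : Set ℝ} (hU : MeasurableSet U) :
    (((radialMeasure n).restrict U).prod (volume.restrict (closedBall 0 ρ))).map
        (polarChart k x₀) ≤
      ENNReal.ofReal ((n * ρ + 1) ^ (n + 1)) • volume.restrict (shell x₀ U) := by
  have hΦ := (continuous_polarChart k x₀).measurable
  calc _ ≤ (((radialMeasure n).restrict U).prod (ENNReal.ofReal ((n * ρ + 1) ^ (n + 1)) •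
        volume.withDensity (sphereDensity k))).map (polarChart k x₀) :=
        Measure.map_mono (Measure.prod_mono le_rfl
          (restrict_closedBall_le_withDensity_sphereDensity k hρ)) hΦ
    _ = ENNReal.ofReal ((n * ρ + 1) ^ (n + 1)) •
        (volume.restrict (faceHalfspace k x₀)).restrict (shell x₀ U) := by
        rw [Measure.prod_smul_right, Measure.map_smul, ← restrict_shell_map_polarChart k x₀ _ hU,
          map_polarChart_eq_restrict]
    _ ≤ _ := by
        gcongr
        exact Measure.restrict_le_self

/-- The cone from `x₀` over the face `k` of the cube. -/
def faceCone (k : CubeFace n) (x₀ : Euc (n + 1)) : Set (Euc (n + 1)) :=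
  faceHalfspace k x₀ ∩ ⋂ i, {x | |(x - x₀) i| ≤ |(x - x₀) k.1|}

lemma measurableSet_faceCone (k : CubeFace n) (x₀ : Euc (n + 1)) :
    MeasurableSet (faceCone k x₀) :=
  (measurableSet_faceHalfspace k x₀).inter
    (.iInter fun i ↦ measurableSet_le (by fun_prop) (by fun_prop))

lemma iUnion_faceCone (x₀ : Euc (n + 1)) : ⋃ k, faceCone k x₀ = {x₀}ᶜ := by
  ext x
  simp only [mem_iUnion, mem_compl_singleton_iff]
  constructor
  · rintro ⟨k, hk, -⟩ rfl
    simp [faceHalfspace] at hk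
  · intro hx
    obtain ⟨j, hj⟩ := Finite.exists_max fun i ↦ |(x - x₀) i|
    have hj0 : (x - x₀) j ≠ 0 := fun h0 ↦ hx <| sub_eq_zero.1 <| PiLp.ext fun i ↦ by
      simpa [h0] using hj i
    rcases hj0.lt_or_gt with h | h
    · exact ⟨(j, -1), by simpa [faceHalfspace, CubeFace.sign] using h, mem_iInter.2 hj⟩
    · exact ⟨(j, 1), by simpa [faceHalfspace, CubeFace.sign] using h, mem_iInter.2 hj⟩

lemma mem_closedBall_of_polarChart_mem_faceCone {k : CubeFace n} {x₀ : Euc (n + 1)} {r : ℝ}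
    (hr : 0 < r) {y : Fin n → ℝ} (h : polarChart k x₀ (r, y) ∈ faceCone k x₀) :
    y ∈ closedBall 0 1 := by
  have hc : 0 < r * ‖facePoint k y‖⁻¹ :=
    mul_pos hr (inv_pos.2 (one_pos.trans_le (one_le_norm_facePoint k y)))
  have hsub : polarChart k x₀ (r, y) - x₀ = (r * ‖facePoint k y‖⁻¹) • facePoint k y := by
    rw [polarChart, sphereChart, smul_smul, add_sub_cancel_left]
  rw [mem_closedBall_zero_iff, pi_norm_le_iff_of_nonneg zero_le_one]
  intro i
  have hi := mem_iInter.1 h.2 (k.1.succAbove i)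
  simp only [mem_ofPred_eq, hsub, PiLp.smul_apply, smul_eq_mul, abs_mul _ (facePoint k y _)] at hi
  simpa [facePoint, k.abs_sign] using le_of_mul_le_mul_left hi (abs_pos.2 hc.ne')

lemma restrict_faceCone_le_map_polarChart (k : CubeFace n) (x₀ : Euc (n + 1)) :
    volume.restrict (faceCone k x₀) ≤
      ((radialMeasure n).prod (volume.restrict (closedBall 0 1))).map (polarChart k x₀) := by
  have hΦ := (continuous_polarChart k x₀).measurable
  have hcone := measurableSet_faceCone k x₀
  have hsub : faceCone k x₀ ⊆ faceHalfspace k x₀ := inter_subset_left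
  have hpre : polarChart k x₀ ⁻¹' faceCone k x₀ ≤ᵐ[(radialMeasure n).prod volume]
      univ ×ˢ closedBall 0 1 := by
    filter_upwards [Measure.quasiMeasurePreserving_fst.ae (ae_radialMeasure_pos (n := n))]
      with z hz hmem
    exact ⟨mem_univ _, mem_closedBall_of_polarChart_mem_faceCone hz hmem⟩
  have hdens : volume.withDensity (sphereDensity k) ≤ volume := by
    simpa using withDensity_mono (μ := volume)
      (Eventually.of_forall (sphereDensity_le_one k) : sphereDensity k ≤ᵐ[volume] 1)
  calc volume.restrict (faceCone k x₀)
      = (((radialMeasure n).prod (volume.withDensity (sphereDensity k))).map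
          (polarChart k x₀)).restrict (faceCone k x₀) := by
        rw [map_polarChart_eq_restrict, Measure.restrict_restrict hcone,
          inter_eq_self_of_subset_left hsub]
    _ ≤ (((radialMeasure n).prod volume).map (polarChart k x₀)).restrict (faceCone k x₀) :=
        Measure.restrict_mono subset_rfl (Measure.map_mono (Measure.prod_mono le_rfl hdens) hΦ)
    _ = (((radialMeasure n).prod volume).restrict (polarChart k x₀ ⁻¹' faceCone k x₀)).map
          (polarChart k x₀) := Measure.restrict_map hΦ hcone
    _ ≤ (((radialMeasure n).prod volume).restrict (univ ×ˢ closedBall 0 1)).map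
          (polarChart k x₀) := Measure.map_mono (Measure.restrict_mono' hpre le_rfl) hΦ
    _ = _ := by rw [← Measure.prod_restrict, Measure.restrict_univ]

theorem restrict_shell_le_sum_map_polarChart (x₀ : Euc (n + 1)) {U : Set ℝ}
    (hU : MeasurableSet U) :
    volume.restrict (shell x₀ U) ≤ ∑ k, (((radialMeasure n).restrict U).prod
      (volume.restrict (closedBall 0 1))).map (polarChart k x₀) := by
  have hvol : volume ≤ ∑ k, ((radialMeasure n).prod
      (volume.restrict (closedBall 0 1))).map (polarChart k x₀) := by
    calc volume = volume.restrict (⋃ k, faceCone k x₀) := by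
          rw [iUnion_faceCone, Measure.restrict_eq_self_of_ae_mem]
          exact compl_mem_ae_iff.2 (measure_singleton x₀)
      _ ≤ ∑ k, volume.restrict (faceCone k x₀) := by
          rw [← Measure.sum_fintype]
          exact Measure.restrict_iUnion_le
      _ ≤ _ := Finset.sum_le_sum fun k _ ↦ restrict_faceCone_le_map_polarChart k x₀
  calc _ ≤ _ := Measure.restrict_mono (s := shell x₀ U) subset_rfl hvol
    _ = _ := by
      rw [← Measure.sum_fintype, Measure.restrict_sum _ (measurableSet_shell x₀ hU),
        Measure.sum_fintype]
      simp only [restrict_shell_map_polarChart _ _ _ hU]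

lemma quasiMeasurePreserving_dist (x₀ : Euc (n + 1)) :
    Measure.QuasiMeasurePreserving (dist · x₀) volume volume := by
  refine ⟨by fun_prop, Measure.AbsolutelyContinuous.mk fun s hs hs0 ↦ ?_⟩
  have hradial : (radialMeasure n).restrict s = 0 := Measure.restrict_eq_zero.2 <|
    ((withDensity_absolutelyContinuous _ _).trans Measure.restrict_le_self.absolutelyContinuous) hs0
  have hshell := restrict_shell_le_sum_map_polarChart x₀ hs
  simp only [hradial, Measure.zero_prod, Measure.map_zero, Finset.sum_const_zero] at hshell
  rw [Measure.map_apply (by fun_prop) hs]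
  exact Measure.restrict_eq_zero.1 (le_antisymm hshell (Measure.zero_le _))

end Shells

section Mollification

lemma rpow_lintegral_le_lintegral_rpow {α : Type*} {_ : MeasurableSpace α} (ν : Measure α)
    [IsProbabilityMeasure ν] {p : ℝ} (hp : 1 ≤ p) {w : α → ℝ≥0∞} (hw : AEMeasurable w ν) :
    (∫⁻ y, w y ∂ν) ^ p ≤ ∫⁻ y, w y ^ p ∂ν := by
  have hp0 : 0 < p := one_pos.trans_le hp
  have h := eLpNorm'_le_eLpNorm'_of_exponent_le one_pos hp ν hw.aestronglyMeasurable
  simp only [eLpNorm'_eq_lintegral_enorm, enorm_eq_self, ENNReal.rpow_one, div_one] at h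
  calc (∫⁻ y, w y ∂ν) ^ p ≤ ((∫⁻ y, w y ^ p ∂ν) ^ (1 / p)) ^ p := by gcongr
    _ = ∫⁻ y, w y ^ p ∂ν := by
      rw [← ENNReal.rpow_mul, one_div_mul_cancel hp0.ne', ENNReal.rpow_one]

theorem lintegral_rpow_lintegral_mul_sub_le {G : Type*} [AddCommGroup G] [MeasurableSpace G]
    [MeasurableAdd₂ G] [MeasurableNeg G] {μ : Measure G} [SFinite μ] [μ.IsAddLeftInvariant]
    [μ.IsNegInvariant] {p : ℝ} (hp : 1 ≤ p) {φ w : G → ℝ≥0∞} (hφ : Measurable φ)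
    (hφ1 : ∫⁻ y, φ y ∂μ = 1) (hw : Measurable w) :
    ∫⁻ x, (∫⁻ y, φ (x - y) * w y ∂μ) ^ p ∂μ ≤ ∫⁻ y, w y ^ p ∂μ := by
  have hφx (x : G) : Measurable fun y ↦ φ (x - y) := hφ.comp (measurable_const.sub measurable_id)
  have hjensen (x : G) : (∫⁻ y, φ (x - y) * w y ∂μ) ^ p ≤ ∫⁻ y, φ (x - y) * w y ^ p ∂μ := by
    have hprob : IsProbabilityMeasure (μ.withDensity fun y ↦ φ (x - y)) :=
      ⟨by rw [withDensity_apply _ .univ, setLIntegral_univ, lintegral_sub_left_eq_self, hφ1]⟩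
    simpa only [lintegral_withDensity_eq_lintegral_mul μ (hφx x) hw, Pi.mul_apply,
      lintegral_withDensity_eq_lintegral_mul μ (hφx x) (hw.pow_const p)] using
      rpow_lintegral_le_lintegral_rpow (μ.withDensity fun y ↦ φ (x - y)) hp hw.aemeasurable
  calc ∫⁻ x, (∫⁻ y, φ (x - y) * w y ∂μ) ^ p ∂μ
      ≤ ∫⁻ x, ∫⁻ y, φ (x - y) * w y ^ p ∂μ ∂μ := lintegral_mono hjensen
    _ = ∫⁻ y, ∫⁻ x, φ (x - y) * w y ^ p ∂μ ∂μ :=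
        lintegral_lintegral_swap ((hφ.comp (measurable_fst.sub measurable_snd)).mul
          ((hw.pow_const p).comp measurable_snd)).aemeasurable
    _ = ∫⁻ y, w y ^ p ∂μ := by
        refine lintegral_congr fun y ↦ ?_
        have hφy : Measurable fun x ↦ φ (x - y) := hφ.comp (measurable_id.sub measurable_const)
        rw [lintegral_mul_const _ hφy, lintegral_sub_right_eq_self, hφ1, one_mul]

lemma opNorm_le_sum_norm_apply_single {d m : ℕ} (T : Euc d →L[ℝ] Euc m) :
    ‖T‖ ≤ ∑ j, ∑ i, ‖T (EuclideanSpace.single j 1) i‖ := by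
  refine T.opNorm_le_bound (by positivity) fun v ↦ ?_
  calc ‖T v‖ = ‖∑ j, v j • T (EuclideanSpace.single j 1)‖ := by
        conv_lhs => rw [← (EuclideanSpace.basisFun (Fin d) ℝ).sum_repr v]
        simp
    _ ≤ ∑ j, ‖v j‖ * ‖T (EuclideanSpace.single j 1)‖ := by
        simpa only [norm_smul] using norm_sum_le Finset.univ
          fun j ↦ v j • T (EuclideanSpace.single j 1)
    _ ≤ ∑ j, ‖v‖ * ∑ i, ‖T (EuclideanSpace.single j 1) i‖ := by
        gcongr with j
        · exact PiLp.norm_apply_le v j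
        · exact norm_le_sum_norm_coord _
    _ = _ := by rw [← Finset.mul_sum, mul_comm]

variable {d m : ℕ}

lemma abs_le_frobNorm (ξ : Mat m d) (i : Fin m) (j : Fin d) : |ξ i j| ≤ frobNorm ξ := by
  refine Real.abs_le_sqrt ?_
  exact (Finset.single_le_sum (f := fun j ↦ ξ i j ^ 2) (fun _ _ ↦ sq_nonneg _)
    (Finset.mem_univ j)).trans <| Finset.single_le_sum (f := fun i ↦ ∑ j, ξ i j ^ 2)
      (fun _ _ ↦ Finset.sum_nonneg fun _ _ ↦ sq_nonneg _) (Finset.mem_univ i)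

lemma continuous_frobNorm : Continuous (frobNorm : Mat m d → ℝ) := by
  unfold frobNorm
  fun_prop

lemma MemW1p.mono {Ω Ω' : Set (Euc d)} (hΩ : MeasurableSet Ω) (hsub : Ω' ⊆ Ω) {p : ℝ≥0∞}
    {u : Euc d → Euc m} {Du : Euc d → Mat m d} (h : MemW1p Ω p u Du) : MemW1p Ω' p u Du := by
  refine ⟨h.1.mono_measure (Measure.restrict_mono hsub le_rfl),
    h.2.1.mono_measure (Measure.restrict_mono hsub le_rfl), fun φ hφ hc hφΩ i j ↦ ?_⟩
  have hrestrict {g : Euc d → ℝ} (hg : ∀ x ∉ tsupport φ, g x = 0) :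
      ∫ x in Ω', g x = ∫ x in Ω, g x :=
    (setIntegral_eq_of_subset_of_forall_sdiff_eq_zero hΩ hsub
      fun x hx ↦ hg x fun hxφ ↦ hx.2 (hφΩ hxφ)).symm
  rw [hrestrict fun x hx ↦ by simp [fderiv_of_notMem_tsupport ℝ hx],
    hrestrict fun x hx ↦ by simp [image_eq_zero_of_notMem_tsupport hx]]
  exact h.2.2 φ hφ hc (hφΩ.trans hsub) i j

/-- The convolution of a `[0,∞]`-valued function with a normalized bump function. -/
def bumpAverage (φ : ContDiffBump (0 : Euc d)) (w : Euc d → ℝ≥0∞) (x : Euc d) : ℝ≥0∞ :=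
  ∫⁻ y, ENNReal.ofReal (φ.normed volume (x - y)) * w y

lemma bumpAverage_congr_ae (φ : ContDiffBump (0 : Euc d)) {w w' : Euc d → ℝ≥0∞}
    (h : w =ᵐ[volume] w') : bumpAverage φ w = bumpAverage φ w' := by
  ext x
  exact lintegral_congr_ae (h.mono fun y hy ↦ by simp only [hy])

lemma bumpAverage_mono (φ : ContDiffBump (0 : Euc d)) {w w' : Euc d → ℝ≥0∞} (h : w ≤ w') :
    bumpAverage φ w ≤ bumpAverage φ w' :=
  fun _ ↦ lintegral_mono fun y ↦ mul_le_mul_right (h y) _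

lemma mul_bumpAverage_le (φ : ContDiffBump (0 : Euc d)) (c : ℝ≥0∞) (w : Euc d → ℝ≥0∞)
    (x : Euc d) : c * bumpAverage φ w x ≤ bumpAverage φ (fun y ↦ c * w y) x := by
  refine (lintegral_const_mul_le _ _).trans_eq (lintegral_congr fun y ↦ ?_)
  exact mul_left_comm _ _ _

lemma bumpAverage_indicator (φ : ContDiffBump (0 : Euc d)) {Ω : Set (Euc d)}
    (hΩ : MeasurableSet Ω) (w : Euc d → ℝ≥0∞) (x : Euc d) :
    bumpAverage φ (Ω.indicator w) x =
      ∫⁻ y in Ω, ENNReal.ofReal (φ.normed volume (x - y)) * w y := by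
  simp only [bumpAverage, ← lintegral_indicator hΩ, indicator_mul_right]

lemma measurable_bumpAverage (φ : ContDiffBump (0 : Euc d)) {w : Euc d → ℝ≥0∞}
    (hw : AEMeasurable w) : Measurable (bumpAverage φ w) := by
  have hφ := (φ.continuous_normed (μ := volume)).measurable
  rw [bumpAverage_congr_ae φ hw.ae_eq_mk]
  exact Measurable.lintegral_prod_right'
    (f := fun z : Euc d × Euc d ↦ ENNReal.ofReal (φ.normed volume (z.1 - z.2)) * hw.mk w z.2)
    ((hφ.comp (measurable_fst.sub measurable_snd)).ennreal_ofReal.mul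
      (hw.measurable_mk.comp measurable_snd))

lemma lintegral_bumpAverage_rpow_le (φ : ContDiffBump (0 : Euc d)) {p : ℝ} (hp : 1 ≤ p)
    {w : Euc d → ℝ≥0∞} (hw : AEMeasurable w volume) :
    ∫⁻ x, bumpAverage φ w x ^ p ≤ ∫⁻ x, w x ^ p := by
  have hφ1 : ∫⁻ y, ENNReal.ofReal (φ.normed volume y) = 1 := by
    rw [← ofReal_integral_eq_lintegral_ofReal φ.integrable_normed
      (Eventually.of_forall φ.nonneg_normed), φ.integral_normed, ENNReal.ofReal_one]
  have hmk : ∫⁻ x, w x ^ p = ∫⁻ x, hw.mk w x ^ p :=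
    lintegral_congr_ae (hw.ae_eq_mk.mono fun x hx ↦ by simp only [hx])
  rw [bumpAverage_congr_ae φ hw.ae_eq_mk, hmk]
  exact lintegral_rpow_lintegral_mul_sub_le hp
    φ.continuous_normed.measurable.ennreal_ofReal hφ1 hw.measurable_mk

/-- The mollification by a normalized bump function of the extension by zero of `u|_Ω`. -/
def mollify (φ : ContDiffBump (0 : Euc d)) (Ω : Set (Euc d)) (u : Euc d → Euc m) :
    Euc d → Euc m :=
  convolution (φ.normed volume) (Ω.indicator u) (ContinuousLinearMap.lsmul ℝ ℝ) volume

section Mollify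

variable (φ : ContDiffBump (0 : Euc d)) {Ω : Set (Euc d)} {u : Euc d → Euc m}
  {Du : Euc d → Mat m d}

lemma contDiff_mollify (hu : LocallyIntegrable (Ω.indicator u)) : ContDiff ℝ 1 (mollify φ Ω u) :=
  φ.hasCompactSupport_normed.contDiff_convolution_left _ φ.contDiff_normed hu

lemma enorm_mollify_le (x : Euc d) :
    ‖mollify φ Ω u x‖ₑ ≤ bumpAverage φ (Ω.indicator fun y ↦ ‖u y‖ₑ) x := by
  rw [mollify, convolution_eq_swap]
  refine (enorm_integral_le_lintegral_enorm _).trans_eq (lintegral_congr fun y ↦ ?_)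
  rw [ContinuousLinearMap.lsmul_apply, enorm_smul, Real.enorm_of_nonneg (φ.nonneg_normed _),
    enorm_indicator_eq_indicator_enorm]

lemma tsupport_normed_comp_sub_subset (x : Euc d) :
    tsupport (fun y ↦ φ.normed volume (x - y)) ⊆ closedBall x φ.rOut := by
  refine closure_minimal (fun y hy ↦ ?_) isClosed_closedBall
  have hy' : x - y ∈ Function.support (φ.normed volume) := hy
  rw [φ.support_normed_eq, mem_ball_zero_iff, ← dist_eq_norm'] at hy'
  exact hy'.le

lemma IsWeakJacobianOn.fderiv_mollify_apply (hw : IsWeakJacobianOn Ω u Du)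
    (hΩ : MeasurableSet Ω) (hu : LocallyIntegrable (Ω.indicator u)) {x : Euc d}
    (hx : closedBall x φ.rOut ⊆ Ω) (i : Fin m) (j : Fin d) :
    fderiv ℝ (mollify φ Ω u) x (EuclideanSpace.single j 1) i =
      ∫ y in Ω, Du y i j * φ.normed volume (x - y) := by
  have hφ1 : ContDiff ℝ 1 (φ.normed volume) := φ.contDiff_normed
  have hsupp := tsupport_normed_comp_sub_subset φ x
  have hcomp (y : Euc d) : fderiv ℝ (fun y ↦ φ.normed volume (x - y)) y =
      -fderiv ℝ (φ.normed volume) (x - y) := by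
    have h := ((hφ1.differentiable one_ne_zero _).hasFDerivAt.comp y
      ((hasFDerivAt_id y).const_sub x)).fderiv
    simpa [Function.comp_def] using h
  have hparts := hw (fun y ↦ φ.normed volume (x - y))
    (φ.contDiff_normed.comp (contDiff_const.sub contDiff_id))
    (HasCompactSupport.of_support_subset_isCompact (isCompact_closedBall x φ.rOut)
      (subset_closure.trans hsupp)) (hsupp.trans hx) i j
  have hint := (HasCompactSupport.convolutionExists_left (μ := volume)
    (ContinuousLinearMap.precompL (Euc d) (ContinuousLinearMap.lsmul ℝ ℝ (E := Euc m)))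
    (φ.hasCompactSupport_normed.fderiv ℝ) (hφ1.continuous_fderiv one_ne_zero) hu x).integrable_swap
  have hcoord := ((EuclideanSpace.proj i : Euc m →L[ℝ] ℝ).comp (ContinuousLinearMap.apply ℝ (Euc m)
    (EuclideanSpace.single j (1 : ℝ) : Euc d))).integral_comp_comm hint
  rw [mollify, (φ.hasCompactSupport_normed.hasFDerivAt_convolution_left _ hφ1 hu x).fderiv,
    convolution_eq_swap]
  refine hcoord.symm.trans ?_
  rw [eq_neg_iff_add_eq_zero, add_comm, ← eq_neg_iff_add_eq_zero] at hparts
  rw [hparts, ← integral_neg, ← integral_indicator hΩ]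
  refine integral_congr_ae (Eventually.of_forall fun y ↦ ?_)
  by_cases hy : y ∈ Ω
  · simp [hy, hcomp, mul_comm]
  · simp [hy]

lemma IsWeakJacobianOn.enorm_fderiv_mollify_le (hw : IsWeakJacobianOn Ω u Du)
    (hΩ : MeasurableSet Ω) (hu : LocallyIntegrable (Ω.indicator u)) {x : Euc d}
    (hx : closedBall x φ.rOut ⊆ Ω) :
    ‖fderiv ℝ (mollify φ Ω u) x‖ₑ ≤
      d * m * bumpAverage φ (Ω.indicator fun y ↦ ‖frobNorm (Du y)‖ₑ) x := by
  have hentry (i : Fin m) (j : Fin d) :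
      ‖fderiv ℝ (mollify φ Ω u) x (EuclideanSpace.single j 1) i‖ₑ ≤
        bumpAverage φ (Ω.indicator fun y ↦ ‖frobNorm (Du y)‖ₑ) x := by
    rw [hw.fderiv_mollify_apply φ hΩ hu hx, bumpAverage_indicator φ hΩ]
    refine (enorm_integral_le_lintegral_enorm _).trans (lintegral_mono fun y ↦ ?_)
    rw [enorm_mul, Real.enorm_of_nonneg (φ.nonneg_normed _), mul_comm]
    gcongr
    rw [enorm_le_iff_norm_le]
    exact (abs_le_frobNorm _ i j).trans (le_abs_self _)
  calc ‖fderiv ℝ (mollify φ Ω u) x‖ₑ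
      ≤ ∑ j, ∑ i, ‖fderiv ℝ (mollify φ Ω u) x (EuclideanSpace.single j 1) i‖ₑ := by
        simp only [← ofReal_norm, ← ENNReal.ofReal_sum_of_nonneg, norm_nonneg, implies_true,
          Finset.sum_nonneg]
        exact ENNReal.ofReal_le_ofReal (opNorm_le_sum_norm_apply_single _)
    _ ≤ ∑ _j : Fin d, ∑ _i : Fin m, bumpAverage φ (Ω.indicator fun y ↦ ‖frobNorm (Du y)‖ₑ) x := by
        gcongr
        exact hentry _ _
    _ = _ := by simp [mul_assoc]

end Mollify

/-- The density `|u| + b |Du|` of the Sobolev norm at length scale `b`. -/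
def sobolevDensity (b : ℝ≥0∞) (u : Euc d → Euc m) (Du : Euc d → Mat m d) (x : Euc d) : ℝ≥0∞ :=
  ‖u x‖ₑ + b * ‖frobNorm (Du x)‖ₑ

lemma MemW1p.aemeasurable_sobolevDensity {Ω : Set (Euc d)} {p : ℝ≥0∞} {u : Euc d → Euc m}
    {Du : Euc d → Mat m d} (h : MemW1p Ω p u Du) (b : ℝ≥0∞) :
    AEMeasurable (sobolevDensity b u Du) (volume.restrict Ω) :=
  h.1.1.enorm.add <|
    (continuous_frobNorm.comp_aestronglyMeasurable h.2.1.1).enorm.const_mul b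

lemma IsWeakJacobianOn.enorm_mollify_add_le {Ω : Set (Euc d)} {u : Euc d → Euc m}
    {Du : Euc d → Mat m d} (hw : IsWeakJacobianOn Ω u Du) (φ : ContDiffBump (0 : Euc d))
    (hm : MeasurableSet Ω) (hu : LocallyIntegrable (Ω.indicator u)) (b : ℝ≥0∞) {x : Euc d}
    (hball : closedBall x φ.rOut ⊆ Ω) :
    ‖mollify φ Ω u x‖ₑ + b * ‖fderiv ℝ (mollify φ Ω u) x‖ₑ ≤
      (1 + d * m) * bumpAverage φ (Ω.indicator (sobolevDensity b u Du)) x := by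
  have hDf := hw.enorm_fderiv_mollify_le φ hm hu hball
  have hval : bumpAverage φ (Ω.indicator fun y ↦ ‖u y‖ₑ) x ≤
      bumpAverage φ (Ω.indicator (sobolevDensity b u Du)) x := by
    refine bumpAverage_mono φ (fun y ↦ ?_) x
    by_cases hy : y ∈ Ω <;> simp [hy, sobolevDensity]
  have hder : b * bumpAverage φ (Ω.indicator fun y ↦ ‖frobNorm (Du y)‖ₑ) x ≤
      bumpAverage φ (Ω.indicator (sobolevDensity b u Du)) x := by
    refine (mul_bumpAverage_le φ b _ x).trans (bumpAverage_mono φ (fun y ↦ ?_) x)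
    by_cases hy : y ∈ Ω <;> simp [hy, sobolevDensity]
  calc _ ≤ bumpAverage φ (Ω.indicator fun y ↦ ‖u y‖ₑ) x +
        b * (d * m * bumpAverage φ (Ω.indicator fun y ↦ ‖frobNorm (Du y)‖ₑ) x) := by
        gcongr
        exact enorm_mollify_le φ x
    _ = bumpAverage φ (Ω.indicator fun y ↦ ‖u y‖ₑ) x +
        d * m * (b * bumpAverage φ (Ω.indicator fun y ↦ ‖frobNorm (Du y)‖ₑ) x) := by
        rw [mul_left_comm]
    _ ≤ _ := by
        rw [add_mul, one_mul]
        gcongr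

/-- The `l`-th function in a sequence of bump functions shrinking to the origin. -/
def shrinkingBump (d l : ℕ) : ContDiffBump (0 : Euc d) where
  rIn := 1 / (l + 1) / 2
  rOut := 1 / (l + 1)
  rIn_pos := by positivity
  rIn_lt_rOut := half_lt_self (by positivity)

lemma tendsto_rOut_shrinkingBump (d : ℕ) :
    Tendsto (fun l ↦ (shrinkingBump d l).rOut) atTop (𝓝 0) :=
  tendsto_one_div_add_atTop_nhds_zero_nat

lemma ae_tendsto_mollify_shrinkingBump {Ω : Set (Euc d)} (hΩ : MeasurableSet Ω)
    {u : Euc d → Euc m} (hu : LocallyIntegrable (Ω.indicator u)) :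
    ∀ᵐ x ∂volume.restrict Ω, Tendsto (fun l ↦ mollify (shrinkingBump d l) Ω u x) atTop
      (𝓝 (u x)) := by
  have h := ContDiffBump.ae_convolution_tendsto_right_of_locallyIntegrable (K := 2)
    (tendsto_rOut_shrinkingBump d)
    (Eventually.of_forall fun l ↦ (mul_div_cancel₀ _ two_ne_zero).ge) hu
  filter_upwards [ae_restrict_of_ae h, ae_restrict_mem hΩ] with x hx hxΩ
  rwa [indicator_of_mem hxΩ] at hx

theorem MemW1p.exists_smooth_approx {Ω : Set (Euc d)} (hΩ : IsOpen Ω) {p : ℝ} (hp : 1 ≤ p)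
    {u : Euc d → Euc m} {Du : Euc d → Mat m d} (h : MemW1p Ω (ENNReal.ofReal p) u Du) (b : ℝ≥0∞) :
    ∃ (f : ℕ → Euc d → Euc m) (W : ℕ → Euc d → ℝ≥0∞), (∀ l, ContDiff ℝ 1 (f l)) ∧
      (∀ l, Measurable (W l)) ∧
      (∀ᵐ x ∂volume.restrict Ω, Tendsto (f · x) atTop (𝓝 (u x))) ∧
      (∀ l, ∫⁻ x, W l x ^ p ≤ ∫⁻ x in Ω, sobolevDensity b u Du x ^ p) ∧
      ∀ K ⊆ Ω, IsCompact K →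
        ∀ᶠ l in atTop, ∀ x ∈ K, ‖f l x‖ₑ + b * ‖fderiv ℝ (f l) x‖ₑ ≤ (1 + d * m) * W l x := by
  have hp0 : 0 < p := one_pos.trans_le hp
  have hm := hΩ.measurableSet
  have hu : LocallyIntegrable (Ω.indicator u) :=
    ((memLp_indicator_iff_restrict hm).2 h.1).locallyIntegrable (ENNReal.one_le_ofReal.2 hp)
  have hw : AEMeasurable (Ω.indicator (sobolevDensity b u Du)) :=
    (aemeasurable_indicator_iff hm).2 (h.aemeasurable_sobolevDensity b)
  refine ⟨fun l ↦ mollify (shrinkingBump d l) Ω u,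
    fun l ↦ bumpAverage (shrinkingBump d l) (Ω.indicator (sobolevDensity b u Du)),
    fun l ↦ contDiff_mollify _ hu, fun l ↦ measurable_bumpAverage _ hw,
    ae_tendsto_mollify_shrinkingBump hm hu, fun l ↦ ?_, fun K hK hKc ↦ ?_⟩
  · refine (lintegral_bumpAverage_rpow_le _ hp hw).trans_eq ?_
    rw [← lintegral_indicator hm]
    refine lintegral_congr fun x ↦ ?_
    by_cases hx : x ∈ Ω <;> simp [hx, hp0]
  · obtain ⟨ε, hε, hεΩ⟩ := hKc.exists_cthickening_subset_open hΩ hK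
    filter_upwards [(tendsto_rOut_shrinkingBump d).eventually_le_const hε] with l hl x hx
    exact h.2.2.enorm_mollify_add_le _ hm hu b
      (((closedBall_subset_closedBall hl).trans (closedBall_subset_cthickening hx ε)).trans hεΩ)

end Mollification

section Slices

variable {n : ℕ}

lemma ae_ae_polarChart (k : CubeFace n) (x₀ : Euc (n + 1)) {ρ : ℝ} (hρ : 0 ≤ ρ) {U : Set ℝ}
    (hU : MeasurableSet U) {P : Euc (n + 1) → Prop}
    (hP : ∀ᵐ x ∂volume.restrict (shell x₀ U), P x) :
    ∀ᵐ r ∂(radialMeasure n).restrict U, ∀ᵐ y ∂volume.restrict (closedBall 0 ρ),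
      P (polarChart k x₀ (r, y)) := by
  refine Measure.ae_ae_of_ae_prod (ae_of_ae_map (continuous_polarChart k x₀).measurable.aemeasurable
    (ae_mono (map_polarChart_prod_restrict_closedBall_le k x₀ hρ hU) ?_))
  exact Measure.ae_smul_measure hP _

lemma lintegral_lintegral_polarChart_le (k : CubeFace n) (x₀ : Euc (n + 1)) {ρ : ℝ} (hρ : 0 ≤ ρ)
    {U : Set ℝ} (hU : MeasurableSet U) {G : Euc (n + 1) → ℝ≥0∞} (hG : Measurable G) :
    ∫⁻ r in U, ∫⁻ y in closedBall 0 ρ, G (polarChart k x₀ (r, y)) ∂volume ∂radialMeasure n ≤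
      ENNReal.ofReal ((n * ρ + 1) ^ (n + 1)) * ∫⁻ x in shell x₀ U, G x := by
  have hΦ := (continuous_polarChart k x₀).measurable
  have hGΦ : Measurable fun z ↦ G (polarChart k x₀ z) := hG.comp hΦ
  rw [← lintegral_prod _ hGΦ.aemeasurable, ← lintegral_map hG hΦ, ← smul_eq_mul,
    ← lintegral_smul_measure]
  exact lintegral_mono' (map_polarChart_prod_restrict_closedBall_le k x₀ hρ hU) le_rfl

lemma ennreal_rpow_mul_rpow_one_div {p : ℝ} (hp : 0 < p) (c I : ℝ≥0∞) :
    (c ^ p * I) ^ (1 / p) = c * I ^ (1 / p) := by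
  rw [ENNReal.mul_rpow_of_nonneg _ _ (by positivity), ← ENNReal.rpow_mul,
    mul_one_div_cancel hp.ne', ENNReal.rpow_one]

lemma liminf_ennreal_rpow {s : ℝ} (hs : 0 < s) (u : ℕ → ℝ≥0∞) :
    liminf (fun l ↦ u l ^ s) atTop = liminf u atTop ^ s :=
  (ENNReal.orderIsoRpow s hs).liminf_apply.symm

section SmoothSlices

variable {F : Type*} [NormedAddCommGroup F] [NormedSpace ℝ F] {f : Euc (n + 1) → F}

lemma contDiff_comp_polarChart (hf : ContDiff ℝ 1 f) (k : CubeFace n) (x₀ : Euc (n + 1)) (r : ℝ) :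
    ContDiff ℝ 1 fun y ↦ f (polarChart k x₀ (r, y)) :=
  hf.comp (contDiff_const.add ((contDiff_sphereChart k).const_smul r))

lemma firstOrderNorm_comp_polarChart_le (hf : ContDiff ℝ 1 f) (k : CubeFace n)
    (x₀ : Euc (n + 1)) {r b K : ℝ} (hr : 0 ≤ r) (hrb : r ≤ b) (hK : 1 ≤ K) {y : Fin n → ℝ}
    (hy : ‖fderiv ℝ (sphereChart k) y‖ ≤ K) :
    firstOrderNorm (fun y ↦ f (polarChart k x₀ (r, y))) y ≤
      K * (‖f (polarChart k x₀ (r, y))‖ + b * ‖fderiv ℝ f (polarChart k x₀ (r, y))‖) := by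
  have hchain : HasFDerivAt (fun y ↦ f (polarChart k x₀ (r, y)))
      ((fderiv ℝ f (polarChart k x₀ (r, y))).comp (r • fderiv ℝ (sphereChart k) y)) y :=
    (hf.differentiable one_ne_zero _).hasFDerivAt.comp y
      ((((contDiff_sphereChart k).differentiable one_ne_zero y).hasFDerivAt.const_smul r).const_add
        x₀)
  rw [firstOrderNorm, hchain.fderiv, mul_add]
  gcongr
  · exact le_mul_of_one_le_left (norm_nonneg _) hK
  · calc _ ≤ ‖fderiv ℝ f (polarChart k x₀ (r, y))‖ * (r * ‖fderiv ℝ (sphereChart k) y‖) := by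
          refine (ContinuousLinearMap.opNorm_comp_le _ _).trans_eq ?_
          rw [norm_smul, Real.norm_of_nonneg hr]
      _ ≤ ‖fderiv ℝ f (polarChart k x₀ (r, y))‖ * (b * K) := by gcongr; exact hr.trans hrb
      _ = _ := by ring

lemma HasLocalSobolev.exists_eLpNorm_comp_polarChart_le {p : ℝ} (hp : 0 < p) {q : ℝ≥0∞}
    (h : HasLocalSobolev (volume : Measure (Fin n → ℝ)) F (ENNReal.ofReal p) q) (k : CubeFace n) :
    ∃ C : ℝ≥0∞, C ≠ ⊤ ∧ ∀ f : Euc (n + 1) → F, ContDiff ℝ 1 f → ∀ (x₀ : Euc (n + 1)) (r b : ℝ),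
      0 ≤ r → r ≤ b → ∀ w : (Fin n → ℝ) → ℝ≥0∞,
      (∀ y, ‖f (polarChart k x₀ (r, y))‖ₑ +
        ENNReal.ofReal b * ‖fderiv ℝ f (polarChart k x₀ (r, y))‖ₑ ≤ w y) →
      eLpNorm (fun y ↦ f (polarChart k x₀ (r, y))) q (volume.restrict (closedBall 0 1)) ≤
        C * (∫⁻ y in closedBall 0 2, w y ^ p) ^ (1 / p) := by
  obtain ⟨C, hC, hsob⟩ := h
  obtain ⟨K, hK⟩ := (isCompact_closedBall (0 : Fin n → ℝ) 2).exists_bound_of_continuousOn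
    ((contDiff_sphereChart k).continuous_fderiv one_ne_zero).continuousOn
  refine ⟨C * ENNReal.ofReal (max K 1), by finiteness, fun f hf x₀ r b hr hrb w hw ↦ ?_⟩
  have hpt (y) (hy : y ∈ closedBall (0 : Fin n → ℝ) 2) :
      ‖firstOrderNorm (fun y ↦ f (polarChart k x₀ (r, y))) y‖ₑ ≤
        ENNReal.ofReal (max K 1) * w y := by
    refine le_trans ?_ (mul_le_mul_right (hw y) _)
    have hb := hr.trans hrb
    rw [Real.enorm_of_nonneg (firstOrderNorm_nonneg _ _), ← ofReal_norm, ← ofReal_norm,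
      ← ENNReal.ofReal_mul hb, ← ENNReal.ofReal_add (by positivity) (by positivity),
      ← ENNReal.ofReal_mul (by positivity)]
    exact ENNReal.ofReal_le_ofReal (firstOrderNorm_comp_polarChart_le hf k x₀ hr hrb
      (le_max_right _ _) ((hK y hy).trans (le_max_left _ _)))
  refine (hsob _ (contDiff_comp_polarChart hf k x₀ r)).trans ?_
  rw [mul_assoc, eLpNorm_eq_lintegral_rpow_enorm_toReal (by simpa using hp) ENNReal.ofReal_ne_top,
    ENNReal.toReal_ofReal hp.le]
  gcongr
  rw [← ennreal_rpow_mul_rpow_one_div hp, ← lintegral_const_mul' _ _ (by finiteness)]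
  gcongr ?_ ^ (1 / p)
  refine setLIntegral_mono' measurableSet_closedBall fun y hy ↦ ?_
  rw [← ENNReal.mul_rpow_of_nonneg _ _ hp.le]
  gcongr
  exact hpt y hy

end SmoothSlices

variable {m : ℕ} {p : ℝ} {q : ℝ≥0∞}

theorem HasLocalSobolev.exists_radial_bound (hp : 1 ≤ p)
    (h : HasLocalSobolev (volume : Measure (Fin n → ℝ)) (Euc m) (ENNReal.ofReal p) q)
    (k : CubeFace n) :
    ∃ C : ℝ≥0∞, C ≠ ⊤ ∧ ∀ (x₀ : Euc (n + 1)) (a b : ℝ) (u : Euc (n + 1) → Euc m)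
      (Du : Euc (n + 1) → Mat m (n + 1)),
      MemW1p (shell x₀ (Ioo a b)) (ENNReal.ofReal p) u Du →
      ∃ g : ℝ → ℝ≥0∞, Measurable g ∧
        ∫⁻ r in Ioo a b, g r ∂radialMeasure n ≤
          C * ∫⁻ x in shell x₀ (Ioo a b), sobolevDensity (ENNReal.ofReal b) u Du x ^ p ∧
        ∀ᵐ r ∂(radialMeasure n).restrict (Ioo a b),
          eLpNorm (fun y ↦ u (polarChart k x₀ (r, y))) q (volume.restrict (closedBall 0 1)) ≤
            g r ^ (1 / p) := by
  have hp0 : 0 < p := one_pos.trans_le hp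
  obtain ⟨C, hC, hslice⟩ := h.exists_eLpNorm_comp_polarChart_le hp0 k
  set A : ℝ≥0∞ := (C * (1 + (n + 1 : ℕ) * m)) ^ p
  have hA : A ≠ ⊤ := by finiteness
  refine ⟨A * ENNReal.ofReal ((n * 2 + 1) ^ (n + 1)), by finiteness, fun x₀ a b u Du hu ↦ ?_⟩
  obtain ⟨f, W, hf, hW, hlim, hWint, hfW⟩ :=
    hu.exists_smooth_approx (isOpen_shell x₀ isOpen_Ioo) hp (ENNReal.ofReal b)
  set g : ℕ → ℝ → ℝ≥0∞ := fun l r ↦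
    A * ∫⁻ y in closedBall 0 2, W l (polarChart k x₀ (r, y)) ^ p
  have hg (l) : Measurable (g l) :=
    (((hW l).comp (continuous_polarChart k x₀).measurable).pow_const p).lintegral_prod_right'
      |>.const_mul _
  refine ⟨fun r ↦ liminf (g · r) atTop, .liminf hg, ?_, ?_⟩
  · refine (lintegral_liminf_le hg).trans
      (liminf_le_of_frequently_le' (Frequently.of_forall fun l ↦ ?_))
    rw [lintegral_const_mul' _ _ hA, mul_assoc]
    gcongr
    refine (lintegral_lintegral_polarChart_le k x₀ zero_le_two measurableSet_Ioo
      ((hW l).pow_const p)).trans (mul_le_mul_right ?_ _)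
    exact (setLIntegral_le_lintegral _ _).trans (hWint l)
  · filter_upwards [ae_ae_polarChart k x₀ zero_le_one measurableSet_Ioo hlim,
      ae_restrict_mem measurableSet_Ioo, ae_restrict_of_ae ae_radialMeasure_pos]
      with r hr hrI hr0
    have hsphere : sphere x₀ r ⊆ shell x₀ (Ioo a b) := preimage_mono (singleton_subset_iff.2 hrI)
    refine (Lp.eLpNorm_lim_le_liminf_eLpNorm (fun l ↦ (contDiff_comp_polarChart (hf l) k x₀
      r).continuous.aestronglyMeasurable) _ hr).trans ?_
    rw [← liminf_ennreal_rpow (by positivity)]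
    refine liminf_le_liminf ?_
    filter_upwards [hfW _ hsphere (isCompact_sphere x₀ r)] with l hl
    refine (hslice (f l) (hf l) x₀ r b hr0.le hrI.2.le _ fun y ↦ hl _ ?_).trans_eq ?_
    · rw [mem_sphere, dist_polarChart, abs_of_pos hr0]
    · simp only [g, A, ENNReal.mul_rpow_of_nonneg _ _ hp0.le, mul_assoc]
      rw [lintegral_const_mul' _ _ (by finiteness), ennreal_rpow_mul_rpow_one_div hp0,
        ennreal_rpow_mul_rpow_one_div hp0, ennreal_rpow_mul_rpow_one_div hp0]

end Slices

section GoodRadii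

lemma exists_measurableSet_forall_le_lintegral {α ι : Type*} [MeasurableSpace α] (μ : Measure α)
    [IsFiniteMeasure μ] [Fintype ι] {g : ι → α → ℝ≥0∞} (hg : ∀ i, Measurable (g i)) :
    ∃ U, MeasurableSet U ∧ μ univ / 2 ≤ μ U ∧
      ∀ x ∈ U, ∀ i, μ univ * g i x ≤ 2 * Fintype.card ι * ∫⁻ y, g i y ∂μ := by
  set bad : ι → Set α := fun i ↦ {x | 2 * Fintype.card ι * ∫⁻ y, g i y ∂μ < μ univ * g i x}
  have hbad_meas (i) : MeasurableSet (bad i) :=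
    measurableSet_lt measurable_const ((hg i).const_mul _)
  have hbad (i) : μ (bad i) ≤ μ univ / (2 * Fintype.card ι) := by
    have : Nonempty ι := ⟨i⟩
    have hcard : (2 * Fintype.card ι : ℝ≥0∞) ≠ 0 := by simp
    rcases eq_or_ne (∫⁻ y, g i y ∂μ) 0 with h0 | h0
    · have hnull : ∀ᵐ x ∂μ, x ∉ bad i := by
        filter_upwards [(lintegral_eq_zero_iff (hg i)).1 h0] with x hx
        simp [bad, hx]
      rw [measure_eq_zero_iff_ae_notMem.2 hnull]
      exact zero_le
    rcases eq_or_ne (∫⁻ y, g i y ∂μ) ⊤ with htop | htop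
    · simp [bad, htop, ENNReal.mul_top hcard]
    have hsub : bad i ⊆ {x | 2 * Fintype.card ι * ∫⁻ y, g i y ∂μ ≤ μ univ * g i x} :=
      fun x hx ↦ (mem_ofPred_eq ▸ hx : _ < _).le
    calc μ (bad i) ≤ μ {x | 2 * Fintype.card ι * ∫⁻ y, g i y ∂μ ≤ μ univ * g i x} :=
          measure_mono hsub
      _ ≤ μ univ * (∫⁻ y, g i y ∂μ) / (2 * Fintype.card ι * ∫⁻ y, g i y ∂μ) := by
          rw [← lintegral_const_mul' (μ univ) (g i) (by finiteness)]
          exact meas_ge_le_lintegral_div ((hg i).const_mul _).aemeasurable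
            (mul_ne_zero hcard h0) (by finiteness)
      _ = μ univ / (2 * Fintype.card ι) := ENNReal.mul_div_mul_right _ _ h0 htop
  refine ⟨(⋃ i, bad i)ᶜ, (MeasurableSet.iUnion hbad_meas).compl, ?_, fun x hx i ↦ ?_⟩
  · rw [measure_compl (.iUnion hbad_meas) (measure_ne_top _ _)]
    refine ENNReal.le_sub_of_add_le_right (measure_ne_top _ _) ?_
    calc _ ≤ μ univ / 2 + ∑ i, μ (bad i) := by gcongr; exact measure_iUnion_fintype_le _ _
      _ ≤ μ univ / 2 + Fintype.card ι * (μ univ / (2 * Fintype.card ι)) := by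
          gcongr
          exact (Finset.sum_le_card_nsmul _ _ _ fun i _ ↦ hbad i).trans_eq (nsmul_eq_mul _ _)
      _ ≤ μ univ := by
          have hdiv : μ univ / (2 * Fintype.card ι) = μ univ / 2 / Fintype.card ι := by
            simp only [div_eq_mul_inv, mul_assoc,
              ENNReal.mul_inv (Or.inl two_ne_zero) (Or.inl ENNReal.ofNat_ne_top)]
          rw [hdiv]
          grw [ENNReal.mul_div_le, ENNReal.add_halves]
  · exact not_lt.1 fun h ↦ hx (mem_iUnion.2 ⟨i, h⟩)

lemma eLpNorm_sum_measure_le {α ι E : Type*} [MeasurableSpace α] [NormedAddCommGroup E] [Fintype ι]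
    {μ : ι → Measure α} {f : α → E} {q S : ℝ≥0∞} (h : ∀ i, eLpNorm f q (μ i) ≤ S) :
    eLpNorm f q (∑ i, μ i) ≤ (Fintype.card ι : ℝ≥0∞) ^ (1 / q.toReal) * S := by
  rcases eq_or_ne q 0 with rfl | hq
  · simp
  rcases eq_or_ne q ⊤ with rfl | hqt
  · simp only [eLpNorm_exponent_top] at h ⊢
    simp only [ENNReal.toReal_top, div_zero, ENNReal.rpow_zero, one_mul]
    refine essSup_le_of_ae_le _ (ae_finsetSum_measure_iff.2 fun i _ ↦ ?_)
    filter_upwards [ae_le_eLpNormEssSup (μ := μ i) (f := f)] with x hx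
    exact hx.trans (h i)
  · have hq0 := ENNReal.toReal_pos hq hqt
    rw [mul_comm, ← ennreal_rpow_mul_rpow_one_div hq0,
      eLpNorm_eq_lintegral_rpow_enorm_toReal hq hqt, lintegral_finsetSum_measure, mul_comm]
    gcongr
    refine (Finset.sum_le_card_nsmul _ _ (S ^ q.toReal) fun i _ ↦ ?_).trans_eq (by simp)
    have := h i
    rwa [eLpNorm_eq_lintegral_rpow_enorm_toReal hq hqt, one_div,
      ENNReal.rpow_inv_le_iff hq0] at this

lemma eLpNorm_prod_le {α β E : Type*} [MeasurableSpace α] [MeasurableSpace β]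
    [NormedAddCommGroup E] {μ : Measure α} {ν : Measure β} [SFinite ν] {f : α × β → E}
    (hf : AEStronglyMeasurable f (μ.prod ν)) {q S : ℝ≥0∞}
    (h : ∀ᵐ x ∂μ, eLpNorm (fun y ↦ f (x, y)) q ν ≤ S) :
    eLpNorm f q (μ.prod ν) ≤ μ univ ^ (1 / q.toReal) * S := by
  rcases eq_or_ne q 0 with rfl | hq
  · simp
  rcases eq_or_ne q ⊤ with rfl | hqt
  · simp only [eLpNorm_exponent_top] at h ⊢
    simp only [ENNReal.toReal_top, div_zero, ENNReal.rpow_zero, one_mul]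
    have hmk : ∀ᵐ z ∂μ.prod ν, ‖hf.mk f z‖ₑ ≤ S := by
      refine (Measure.ae_prod_iff_ae_ae (measurableSet_le
        hf.stronglyMeasurable_mk.enorm measurable_const)).2 ?_
      filter_upwards [h, Measure.ae_ae_of_ae_prod hf.ae_eq_mk] with x hx hmk
      filter_upwards [ae_le_eLpNormEssSup (μ := ν) (f := fun y ↦ f (x, y)), hmk] with y hy hxy
      exact hxy ▸ hy.trans hx
    refine essSup_le_of_ae_le _ ?_
    filter_upwards [hmk, hf.ae_eq_mk] with z hz hfz
    exact hfz ▸ hz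
  · have hq0 := ENNReal.toReal_pos hq hqt
    rw [mul_comm, ← ennreal_rpow_mul_rpow_one_div hq0,
      eLpNorm_eq_lintegral_rpow_enorm_toReal hq hqt, lintegral_prod _ (hf.enorm.pow_const _),
      ← lintegral_const]
    gcongr ?_ ^ _
    refine lintegral_mono_ae ?_
    filter_upwards [h] with x hx
    rwa [eLpNorm_eq_lintegral_rpow_enorm_toReal hq hqt, one_div, ENNReal.rpow_inv_le_iff hq0] at hx

variable {n : ℕ}

lemma eLpNorm_restrict_shell_le {E : Type*} [NormedAddCommGroup E] {x₀ : Euc (n + 1)} {U : Set ℝ}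
    (hU : MeasurableSet U) {f : Euc (n + 1) → E}
    (hf : AEStronglyMeasurable f (volume.restrict (shell x₀ U))) {q S : ℝ≥0∞}
    (h : ∀ k : CubeFace n, ∀ᵐ r ∂(radialMeasure n).restrict U,
      eLpNorm (fun y ↦ f (polarChart k x₀ (r, y))) q (volume.restrict (closedBall 0 1)) ≤ S) :
    eLpNorm f q (volume.restrict (shell x₀ U)) ≤
      (Fintype.card (CubeFace n) * radialMeasure n U) ^ (1 / q.toReal) * S := by
  rw [ENNReal.mul_rpow_of_nonneg _ _ (by positivity), mul_assoc]
  refine (eLpNorm_mono_measure f (restrict_shell_le_sum_map_polarChart x₀ hU)).trans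
    (eLpNorm_sum_measure_le fun k ↦ ?_)
  have hΦ := (continuous_polarChart k x₀).measurable
  have hfΦ := (hf.smul_measure _).mono_measure
    (map_polarChart_prod_restrict_closedBall_le k x₀ zero_le_one hU)
  rw [eLpNorm_map_measure hfΦ hΦ.aemeasurable]
  simpa using eLpNorm_prod_le (hfΦ.comp_measurable hΦ) (h k)

lemma restrict_radialMeasure {U : Set ℝ} (hU : MeasurableSet U) (hU0 : U ⊆ Ioi 0) :
    (radialMeasure n).restrict U =
      (volume.restrict U).withDensity fun r ↦ ENNReal.ofReal (r ^ n) := by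
  rw [radialMeasure, restrict_withDensity hU, Measure.restrict_restrict_of_subset hU0]

lemma smul_restrict_le_restrict_radialMeasure {U : Set ℝ} (hU : MeasurableSet U) {a : ℝ}
    (ha : 0 ≤ a) (hUa : U ⊆ Ioi a) :
    ENNReal.ofReal (a ^ n) • volume.restrict U ≤ (radialMeasure n).restrict U := by
  rw [restrict_radialMeasure hU (hUa.trans (Ioi_subset_Ioi ha)), ← withDensity_const]
  refine withDensity_mono ?_
  filter_upwards [ae_restrict_mem hU] with r hr
  gcongr
  exact (hUa hr).le

lemma radialMeasure_le {U : Set ℝ} (hU : MeasurableSet U) {b : ℝ} (hUb : U ⊆ Ioo 0 b) :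
    radialMeasure n U ≤ ENNReal.ofReal (b ^ n) * volume U := by
  rw [← Measure.restrict_apply_self, restrict_radialMeasure hU fun r hr ↦ (hUb hr).1,
    withDensity_apply _ hU, Measure.restrict_restrict_of_subset subset_rfl, ← setLIntegral_const]
  refine setLIntegral_mono' hU fun r hr ↦ ?_
  gcongr
  exacts [(hUb hr).1.le, (hUb hr).2.le]

theorem HasLocalSobolev.exists_good_radii {m : ℕ} {p : ℝ} {q : ℝ≥0∞} (hp : 1 ≤ p)
    (h : HasLocalSobolev (volume : Measure (Fin n → ℝ)) (Euc m) (ENNReal.ofReal p) q)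
    (ι : Type*) [Finite ι] :
    ∃ C : ℝ≥0∞, C ≠ ⊤ ∧ ∀ (x₀ : Euc (n + 1)) (a b : ℝ), 0 ≤ a → a < b →
      ∀ (u : ι → Euc (n + 1) → Euc m) (Du : ι → Euc (n + 1) → Mat m (n + 1)),
        (∀ i, MemW1p (shell x₀ (Ioo a b)) (ENNReal.ofReal p) (u i) (Du i)) →
        ∃ U ⊆ Ioo a b, MeasurableSet U ∧ (b - a) / 2 ≤ volume.real U ∧
          ∀ i k, ∀ᵐ r ∂(radialMeasure n).restrict U,
            (ENNReal.ofReal (a ^ n) * ENNReal.ofReal (b - a)) ^ (1 / p) *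
              eLpNorm (fun y ↦ u i (polarChart k x₀ (r, y))) q
                (volume.restrict (closedBall 0 1)) ≤
            (C * ∫⁻ x in shell x₀ (Ioo a b),
              sobolevDensity (ENNReal.ofReal b) (u i) (Du i) x ^ p) ^ (1 / p) := by
  cases nonempty_fintype ι
  choose A hA hbound using fun k : CubeFace n ↦ h.exists_radial_bound hp k
  refine ⟨2 * Fintype.card (ι × CubeFace n) * ∑ k, A k, ?_, fun x₀ a b ha hab u Du hu ↦ ?_⟩
  · exact ENNReal.mul_ne_top (by finiteness) (ENNReal.sum_ne_top.2 fun k _ ↦ hA k)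
  choose g hg hgint hgbound using fun j : ι × CubeFace n ↦
    hbound j.2 x₀ a b (u j.1) (Du j.1) (hu j.1)
  obtain ⟨V, hV, hVvol, hVg⟩ :=
    exists_measurableSet_forall_le_lintegral (volume.restrict (Ioo a b)) hg
  rw [Measure.restrict_apply_univ, Real.volume_Ioo] at hVvol hVg
  refine ⟨V ∩ Ioo a b, inter_subset_right, hV.inter measurableSet_Ioo, ?_, fun i k ↦ ?_⟩
  · rw [Measure.restrict_apply hV] at hVvol
    have hfin : volume (V ∩ Ioo a b) ≠ ⊤ := measure_ne_top_of_subset inter_subset_right (by simp)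
    have := ENNReal.toReal_mono hfin hVvol
    rwa [ENNReal.toReal_div, ENNReal.toReal_ofReal (sub_nonneg.2 hab.le),
      ENNReal.toReal_ofNat] at this
  have hmono : (radialMeasure n).restrict (V ∩ Ioo a b) ≤ (radialMeasure n).restrict (Ioo a b) :=
    Measure.restrict_mono inter_subset_right le_rfl
  filter_upwards [ae_mono hmono (hgbound (i, k)),
    ae_restrict_mem (hV.inter measurableSet_Ioo)] with r hr hrV
  grw [hr, ← ENNReal.mul_rpow_of_nonneg _ _ (by positivity)]
  gcongr ?_ ^ _
  calc ENNReal.ofReal (a ^ n) * ENNReal.ofReal (b - a) * g (i, k) r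
      ≤ 2 * Fintype.card (ι × CubeFace n) *
          (ENNReal.ofReal (a ^ n) * ∫⁻ t in Ioo a b, g (i, k) t) := by
        grw [mul_assoc, hVg r hrV.1 (i, k)]
        exact (mul_left_comm _ _ _).le
    _ ≤ 2 * Fintype.card (ι × CubeFace n) * ∫⁻ t in Ioo a b, g (i, k) t ∂radialMeasure n := by
        rw [← smul_eq_mul (ENNReal.ofReal _), ← lintegral_smul_measure]
        grw [smul_restrict_le_restrict_radialMeasure measurableSet_Ioo ha Ioo_subset_Ioi_self]
    _ ≤ _ := by
        grw [hgint (i, k), Finset.single_le_sum (f := A) (fun _ _ ↦ zero_le) (Finset.mem_univ k)]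
        exact (mul_assoc _ _ _).ge

theorem HasLocalSobolev.exists_eLpNorm_shell_le {m : ℕ} {p : ℝ} {q : ℝ≥0∞} (hp : 1 ≤ p)
    (h : HasLocalSobolev (volume : Measure (Fin n → ℝ)) (Euc m) (ENNReal.ofReal p) q)
    (ι : Type*) [Finite ι] :
    ∃ C : ℝ≥0∞, C ≠ ⊤ ∧ ∀ (x₀ : Euc (n + 1)) (a b : ℝ), 0 < a → a < b → b ≤ 2 * a →
      ∀ (u : ι → Euc (n + 1) → Euc m) (Du : ι → Euc (n + 1) → Mat m (n + 1)),
        (∀ i, MemW1p (shell x₀ (Ioo a b)) (ENNReal.ofReal p) (u i) (Du i)) →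
        ∃ U ⊆ Ioo a b, MeasurableSet U ∧ (b - a) / 2 ≤ volume.real U ∧
          ∀ i, eLpNorm (u i) q (volume.restrict (shell x₀ U)) ≤
            C * ENNReal.ofReal (b ^ n * (b - a)) ^ (1 / q.toReal - 1 / p) *
              (∫⁻ x in shell x₀ (Ioo a b),
                sobolevDensity (ENNReal.ofReal b) (u i) (Du i) x ^ p) ^ (1 / p) := by
  obtain ⟨A, hA, hgood⟩ := h.exists_good_radii hp ι
  refine ⟨(Fintype.card (CubeFace n) : ℝ≥0∞) ^ (1 / q.toReal) * (2 ^ n * A) ^ (1 / p), ?_,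
    fun x₀ a b ha hab hba u Du hu ↦ ?_⟩
  · have : 0 ≤ 1 / p := by positivity
    finiteness
  obtain ⟨U, hUab, hU, hUvol, hUg⟩ := hgood x₀ a b ha.le hab u Du hu
  refine ⟨U, hUab, hU, hUvol, fun i ↦ ?_⟩
  set X := ENNReal.ofReal (b ^ n * (b - a))
  set I := ∫⁻ x in shell x₀ (Ioo a b), sobolevDensity (ENNReal.ofReal b) (u i) (Du i) x ^ p
  have hX0 : X ≠ 0 := by
    have := sub_pos.2 hab
    have := ha.trans hab
    simp only [X, ne_eq, ENNReal.ofReal_eq_zero, not_le]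
    positivity
  have hX : X ≤ 2 ^ n * (ENNReal.ofReal (a ^ n) * ENNReal.ofReal (b - a)) := by
    rw [← ENNReal.ofReal_ofNat, ← ENNReal.ofReal_pow zero_le_two,
      ← ENNReal.ofReal_mul (by positivity), ← ENNReal.ofReal_mul (by positivity),
      ← mul_assoc, ← mul_pow]
    refine ENNReal.ofReal_le_ofReal ?_
    gcongr
    exact (ha.trans hab).le
  have hslice (k) : ∀ᵐ r ∂(radialMeasure n).restrict U,
      eLpNorm (fun y ↦ u i (polarChart k x₀ (r, y))) q (volume.restrict (closedBall 0 1)) ≤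
        (2 ^ n * A * I / X) ^ (1 / p) := by
    filter_upwards [hUg i k] with r hr
    rw [ENNReal.div_rpow_of_nonneg _ _ (by positivity), ENNReal.le_div_iff_mul_le
      (.inl (by simp [hX0, X])) (.inl (by finiteness)), mul_comm]
    grw [hX]
    rw [ENNReal.mul_rpow_of_nonneg _ _ (by positivity), mul_assoc]
    grw [hr]
    rw [← ENNReal.mul_rpow_of_nonneg _ _ (by positivity), mul_assoc]
  have hUX : radialMeasure n U ≤ X := by
    grw [radialMeasure_le hU (hUab.trans (Ioo_subset_Ioo_left ha.le)), hUab, Real.volume_Ioo]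
    rw [← ENNReal.ofReal_mul (pow_nonneg (ha.trans hab).le n)]
  grw [eLpNorm_restrict_shell_le hU ((hu i).1.1.mono_measure
    (Measure.restrict_mono (preimage_mono hUab) le_rfl)) hslice, hUX]
  rw [ENNReal.rpow_sub _ _ hX0 ENNReal.ofReal_ne_top,
    ENNReal.div_rpow_of_nonneg _ _ (by positivity), ENNReal.mul_rpow_of_nonneg _ _ (by positivity),
    ENNReal.mul_rpow_of_nonneg _ I (by positivity)]
  simp only [div_eq_mul_inv]
  exact (by ring : _ = _).le

end GoodRadii

section Cutoff

/-- The profile descending from `1` to `0` with constant slope on `U` and no slope off `U`. -/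
def layerProfile (U : Set ℝ) (t : ℝ) : ℝ :=
  ∫ s in Ioi t, U.indicator (fun _ ↦ (volume.real U)⁻¹) s

section Profile

variable {U : Set ℝ}

lemma indicator_inv_volume_nonneg (s : ℝ) : 0 ≤ U.indicator (fun _ ↦ (volume.real U)⁻¹) s :=
  indicator_nonneg (fun _ _ ↦ by positivity) s

lemma layerProfile_nonneg (U : Set ℝ) (t : ℝ) : 0 ≤ layerProfile U t :=
  integral_nonneg indicator_inv_volume_nonneg

lemma layerProfile_eq_zero {b t : ℝ} (hUb : U ⊆ Iio b) (hbt : b ≤ t) : layerProfile U t = 0 :=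
  setIntegral_eq_zero_of_forall_eq_zero fun _ hs ↦
    indicator_of_notMem (fun hsU ↦ (hbt.trans_lt hs).not_gt (hUb hsU)) _

variable (hU : MeasurableSet U) (hU0 : volume.real U ≠ 0)
include hU hU0

lemma integrable_indicator_inv_volume :
    Integrable (U.indicator fun _ ↦ (volume.real U)⁻¹) :=
  (integrable_indicator_iff hU).2 (integrableOn_const (ENNReal.toReal_ne_zero.1 hU0).2)

lemma integral_indicator_inv_volume : ∫ s, U.indicator (fun _ ↦ (volume.real U)⁻¹) s = 1 := by
  rw [integral_indicator hU, setIntegral_const, smul_eq_mul, mul_inv_cancel₀ hU0]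

lemma layerProfile_le_one (t : ℝ) : layerProfile U t ≤ 1 := by
  rw [← integral_indicator_inv_volume hU hU0]
  exact setIntegral_le_integral (integrable_indicator_inv_volume hU hU0)
    (Eventually.of_forall indicator_inv_volume_nonneg)

lemma layerProfile_eq_one {a t : ℝ} (hUa : U ⊆ Ioi a) (hta : t ≤ a) : layerProfile U t = 1 := by
  rw [← integral_indicator_inv_volume hU hU0]
  exact setIntegral_eq_integral_of_forall_compl_eq_zero fun s hs ↦
    indicator_of_notMem (fun hsU ↦ hs (hta.trans_lt (hUa hsU))) _

lemma layerProfile_sub_layerProfile (s t : ℝ) :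
    layerProfile U s - layerProfile U t =
      ∫ r in s..t, U.indicator (fun _ ↦ (volume.real U)⁻¹) r :=
  have hint := integrable_indicator_inv_volume hU hU0
  intervalIntegral.integral_Ioi_sub_Ioi' hint.integrableOn hint.integrableOn

lemma lipschitzWith_layerProfile :
    LipschitzWith (Real.toNNReal (volume.real U)⁻¹) (layerProfile U) := by
  refine LipschitzWith.of_dist_le_mul fun s t ↦ ?_
  rw [Real.coe_toNNReal _ (by positivity), Real.dist_eq, Real.dist_eq, abs_sub_comm s,
    layerProfile_sub_layerProfile hU hU0, ← Real.norm_eq_abs]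
  refine intervalIntegral.norm_integral_le_of_norm_le_const fun r _ ↦ ?_
  rw [Real.norm_of_nonneg (indicator_inv_volume_nonneg r)]
  exact indicator_le_self' (fun _ _ ↦ by positivity) r

lemma ae_hasDerivAt_layerProfile :
    ∀ᵐ t, HasDerivAt (layerProfile U) (-U.indicator (fun _ ↦ (volume.real U)⁻¹) t) t := by
  have hint := integrable_indicator_inv_volume hU hU0
  filter_upwards [LocallyIntegrable.ae_hasDerivAt_integral hint.locallyIntegrable] with t ht
  refine ((ht 0).const_sub (layerProfile U 0)).congr_of_eventuallyEq (.of_forall fun s ↦ ?_)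
  simp only [← layerProfile_sub_layerProfile hU hU0, sub_sub_cancel]

end Profile

/-- `η` is a Lipschitz cutoff between `ball x₀ a` and `ball x₀ b` with constant `L`, whose gradient
is represented almost everywhere by the function `Dη`. -/
structure IsCutoff {d : ℕ} (x₀ : Euc d) (a b L : ℝ) (η : Euc d → ℝ) (Dη : Euc d → Euc d) :
    Prop where
  nonneg : ∀ x, 0 ≤ η x
  le_one : ∀ x, η x ≤ 1
  eq_one : ∀ x ∈ ball x₀ a, η x = 1
  eq_zero : ∀ x ∉ ball x₀ b, η x = 0
  lipschitzWith : LipschitzWith L.toNNReal η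
  hasGradientAt : ∀ᵐ x, HasGradientAt η (Dη x) x

lemma IsCutoff.mono {d : ℕ} {x₀ : Euc d} {a b L L' : ℝ} {η : Euc d → ℝ} {Dη : Euc d → Euc d}
    (h : IsCutoff x₀ a b L η Dη) (hL : L ≤ L') : IsCutoff x₀ a b L' η Dη :=
  { h with lipschitzWith := h.lipschitzWith.weaken (Real.toNNReal_le_toNNReal hL) }

lemma IsCutoff.ae_norm_gradient_le {d : ℕ} {x₀ : Euc d} {a b L : ℝ} {η : Euc d → ℝ}
    {Dη : Euc d → Euc d} (h : IsCutoff x₀ a b L η Dη) (hL : 0 ≤ L) : ∀ᵐ x, ‖Dη x‖ ≤ L := by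
  filter_upwards [h.hasGradientAt] with x hx
  rw [← Real.coe_toNNReal L hL, ← (InnerProductSpace.toDual ℝ (Euc d)).norm_map]
  exact hx.hasFDerivAt.le_of_lipschitz h.lipschitzWith

lemma exists_isCutoff {n : ℕ} (x₀ : Euc (n + 1)) {a b : ℝ} {U : Set ℝ} (hU : MeasurableSet U)
    (hU0 : volume.real U ≠ 0) (hUab : U ⊆ Ioo a b) :
    ∃ η Dη, IsCutoff x₀ a b (volume.real U)⁻¹ η Dη ∧ ∀ᵐ x, x ∉ shell x₀ U → Dη x = 0 := by
  have hne : ∀ᵐ x : Euc (n + 1), x ≠ x₀ := by simp [ae_iff]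
  have hfderiv : ∀ᵐ x, HasFDerivAt (fun x ↦ layerProfile U (dist x x₀))
      ((-U.indicator (fun _ ↦ (volume.real U)⁻¹) (dist x x₀)) • fderiv ℝ (dist · x₀) x) x := by
    filter_upwards [(quasiMeasurePreserving_dist x₀).ae (ae_hasDerivAt_layerProfile hU hU0), hne]
      with x hx hxne
    have hdist : DifferentiableAt ℝ (dist · x₀) x := differentiableAt_id.dist ℝ (by fun_prop) hxne
    exact hx.comp_hasFDerivAt x hdist.hasFDerivAt
  refine ⟨fun x ↦ layerProfile U (dist x x₀), gradient fun x ↦ layerProfile U (dist x x₀),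
    ⟨fun _ ↦ layerProfile_nonneg U _, fun _ ↦ layerProfile_le_one hU hU0 _, fun x hx ↦
      layerProfile_eq_one hU hU0 (hUab.trans Ioo_subset_Ioi_self) (mem_ball.1 hx).le, fun x hx ↦
      layerProfile_eq_zero (hUab.trans Ioo_subset_Iio_self) (not_lt.1 hx), ?_, ?_⟩, ?_⟩
  · exact mul_one (Real.toNNReal _) ▸
      (lipschitzWith_layerProfile hU hU0).comp (LipschitzWith.dist_left x₀)
  · exact hfderiv.mono fun x hx ↦ hx.differentiableAt.hasGradientAt
  · filter_upwards [hfderiv] with x hx hxU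
    have hxU' : dist x x₀ ∉ U := hxU
    rw [gradient, hx.fderiv, indicator_of_notMem hxU', neg_zero, zero_smul, map_zero]

end Cutoff

section Estimate

lemma frobNorm_nonneg {m d : ℕ} (ξ : Mat m d) : 0 ≤ frobNorm ξ := Real.sqrt_nonneg _

lemma frobNorm_tensor {m d : ℕ} (v : Euc d) (w : Euc m) :
    frobNorm (fun i j ↦ v j * w i) = ‖v‖ * ‖w‖ := by
  rw [frobNorm, EuclideanSpace.norm_eq, EuclideanSpace.norm_eq, ← Real.sqrt_mul (by positivity),
    Finset.sum_mul_sum, Finset.sum_comm]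
  simp only [mul_pow, Real.norm_eq_abs, sq_abs]

lemma frobNorm_le_norm {m d : ℕ} (ξ : Mat m d) : frobNorm ξ ≤ √(m * d) * ‖ξ‖ := by
  refine Real.sqrt_le_iff.2 ⟨by positivity, ?_⟩
  calc ∑ i, ∑ j, ξ i j ^ 2 ≤ ∑ _i : Fin m, ∑ _j : Fin d, ‖ξ‖ ^ 2 := by
        refine Finset.sum_le_sum fun i _ ↦ Finset.sum_le_sum fun j _ ↦ ?_
        exact sq_le_sq' (neg_le_of_abs_le ((norm_le_pi_norm (ξ i) j).trans (norm_le_pi_norm ξ i)))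
          (le_of_abs_le ((norm_le_pi_norm (ξ i) j).trans (norm_le_pi_norm ξ i)))
    _ = (√(m * d) * ‖ξ‖) ^ 2 := by
        rw [mul_pow, Real.sq_sqrt (by positivity)]
        simp [mul_assoc]

lemma memLp_frobNorm {d m : ℕ} {p : ℝ≥0∞} {μ : Measure (Euc d)}
    {ξ : Euc d → Mat m d} (h : MemLp ξ p μ) : MemLp (fun x ↦ frobNorm (ξ x)) p μ :=
  h.of_le_mul (continuous_frobNorm.comp_aestronglyMeasurable h.1) <| .of_forall fun x ↦ by
    rw [Real.norm_of_nonneg (frobNorm_nonneg _)]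
    exact frobNorm_le_norm (ξ x)

lemma MemW1p.lintegral_sobolevDensity_le {d m : ℕ} {Ω : Set (Euc d)} {p : ℝ} (hp : 1 ≤ p)
    {u : Euc d → Euc m} {Du : Euc d → Mat m d} (h : MemW1p Ω (ENNReal.ofReal p) u Du) {b : ℝ}
    (hb : 0 ≤ b) :
    (∫⁻ x in Ω, sobolevDensity (ENNReal.ofReal b) u Du x ^ p) ^ (1 / p) ≤
      ENNReal.ofReal (b * (∫ x in Ω, frobNorm (Du x) ^ p) ^ (1 / p) +
        (∫ x in Ω, ‖u x‖ ^ p) ^ (1 / p)) := by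
  have hp0 : 0 < p := one_pos.trans_le hp
  have hp' : ENNReal.ofReal p ≠ 0 := by simpa using hp0
  have hpt : ENNReal.ofReal p ≠ ⊤ := ENNReal.ofReal_ne_top
  have hF := memLp_frobNorm h.2.1
  have hu := h.1.eLpNorm_eq_integral_rpow_norm hp' hpt
  have hDu := hF.eLpNorm_eq_integral_rpow_norm hp' hpt
  simp only [eLpNorm_eq_lintegral_rpow_enorm_toReal hp' hpt, ENNReal.toReal_ofReal hp0.le,
    Real.norm_of_nonneg (frobNorm_nonneg _), ← one_div] at hu hDu
  calc (∫⁻ x in Ω, sobolevDensity (ENNReal.ofReal b) u Du x ^ p) ^ (1 / p)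
      ≤ (∫⁻ x in Ω, ‖u x‖ₑ ^ p) ^ (1 / p) +
          (∫⁻ x in Ω, (ENNReal.ofReal b * ‖frobNorm (Du x)‖ₑ) ^ p) ^ (1 / p) :=
        ENNReal.lintegral_Lp_add_le h.1.1.enorm (hF.1.enorm.const_mul _) hp
    _ = (∫⁻ x in Ω, ‖u x‖ₑ ^ p) ^ (1 / p) +
          ENNReal.ofReal b * (∫⁻ x in Ω, ‖frobNorm (Du x)‖ₑ ^ p) ^ (1 / p) := by
        simp only [ENNReal.mul_rpow_of_nonneg _ _ hp0.le]
        rw [lintegral_const_mul' _ _ (by finiteness), ennreal_rpow_mul_rpow_one_div hp0]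
    _ = _ := by
        have hint0 : 0 ≤ ∫ x in Ω, frobNorm (Du x) ^ p :=
          integral_nonneg fun x ↦ Real.rpow_nonneg (frobNorm_nonneg _) p
        rw [hu, hDu, ← ENNReal.ofReal_mul hb, ← ENNReal.ofReal_add (by positivity) (by positivity),
          add_comm]

variable {n m : ℕ} {p : ℝ} {q : ℝ≥0∞}

theorem HasLocalSobolev.exists_isCutoff_eLpNorm_le (hp : 1 ≤ p)
    (h : HasLocalSobolev (volume : Measure (Fin n → ℝ)) (Euc m) (ENNReal.ofReal p) q)
    (ι : Type*) [Finite ι] :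
    ∃ C : ℝ≥0∞, C ≠ ⊤ ∧ ∀ (x₀ : Euc (n + 1)) (a b : ℝ), 0 < a → a < b → b ≤ 2 * a →
      ∀ (u : ι → Euc (n + 1) → Euc m) (Du : ι → Euc (n + 1) → Mat m (n + 1)),
        (∀ i, MemW1p (shell x₀ (Ioo a b)) (ENNReal.ofReal p) (u i) (Du i)) →
        ∃ η Dη, IsCutoff x₀ a b (2 / (b - a)) η Dη ∧
          ∀ i, eLpNorm (fun x ↦ frobNorm (fun k l ↦ Dη x l * u i x k)) q volume ≤
            ENNReal.ofReal (2 / (b - a)) *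
              (C * ENNReal.ofReal (b ^ n * (b - a)) ^ (1 / q.toReal - 1 / p) *
                (∫⁻ x in shell x₀ (Ioo a b),
                  sobolevDensity (ENNReal.ofReal b) (u i) (Du i) x ^ p) ^ (1 / p)) := by
  obtain ⟨C, hC, hgood⟩ := h.exists_eLpNorm_shell_le hp ι
  refine ⟨C, hC, fun x₀ a b ha hab hba u Du hu ↦ ?_⟩
  obtain ⟨U, hUab, hU, hUvol, hbound⟩ := hgood x₀ a b ha hab hba u Du hu
  have hba0 : 0 < b - a := sub_pos.2 hab
  have hU0 : 0 < volume.real U := (half_pos hba0).trans_le hUvol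
  have hinv : (volume.real U)⁻¹ ≤ 2 / (b - a) := by
    rw [← inv_div]
    exact inv_anti₀ (half_pos hba0) hUvol
  obtain ⟨η, Dη, hη, hDη⟩ := exists_isCutoff x₀ hU hU0.ne' hUab
  refine ⟨η, Dη, hη.mono hinv, fun i ↦ ?_⟩
  grw [← hbound i, ← eLpNorm_indicator_eq_eLpNorm_restrict (measurableSet_shell x₀ hU)]
  refine eLpNorm_le_mul_eLpNorm_of_ae_le_mul ?_ q
  filter_upwards [hDη, (hη.mono hinv).ae_norm_gradient_le (by positivity)] with x hx hx'
  rw [frobNorm_tensor, norm_mul, norm_norm, norm_norm]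
  by_cases hxU : x ∈ shell x₀ U
  · rw [indicator_of_mem hxU]
    gcongr
  · simp [hx hxU, indicator_of_notMem hxU]

lemma annulus_scaling (n : ℕ) {R δ : ℝ} (hR : 0 < R) (hδ : 0 < δ) (s t : ℝ) :
    2 / (δ * R) * (R ^ n * (δ * R)) ^ (t - s) =
      2 * R ^ ((n + 1) * t - (n + 1) * s - 1) / δ ^ (1 + s - t) := by
  have hvol : R ^ n * (δ * R) = δ * R ^ ((n : ℝ) + 1) := by
    rw [Real.rpow_add_one hR.ne', Real.rpow_natCast]
    ring
  rw [hvol, Real.mul_rpow hδ.le (by positivity), ← Real.rpow_mul hR.le, ← mul_sub,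
    Real.rpow_sub_one hR.ne', ← sub_sub_eq_add_sub, Real.rpow_sub hδ 1, Real.rpow_one]
  field_simp

lemma MemW1p.annulus_estimate {u : Euc (n + 1) → Euc m} {Du : Euc (n + 1) → Mat m (n + 1)}
    {x₀ : Euc (n + 1)} {R δ : ℝ} (hp : 1 ≤ p) (hR : 0 < R) (hδ : 0 < δ)
    (hu : MemW1p (ball x₀ R \ ball x₀ ((1 - δ) * R)) (ENNReal.ofReal p) u Du) (A : ℝ≥0) (t : ℝ) :
    ENNReal.ofReal (2 / (δ * R)) * (A * ENNReal.ofReal (R ^ n * (δ * R)) ^ (t - 1 / p) *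
        (∫⁻ x in shell x₀ (Ioo ((1 - δ) * R) R),
          sobolevDensity (ENNReal.ofReal R) u Du x ^ p) ^ (1 / p)) ≤
      ENNReal.ofReal (2 * (A + 1) * R ^ ((n + 1) * t - (n + 1) * (1 / p) - 1) /
          δ ^ (1 + 1 / p - t) *
        (R * (∫ x in ball x₀ R \ ball x₀ ((1 - δ) * R), frobNorm (Du x) ^ p) ^ (1 / p) +
          (∫ x in ball x₀ R \ ball x₀ ((1 - δ) * R), ‖u x‖ ^ p) ^ (1 / p))) := by
  have hshell : shell x₀ (Ioo ((1 - δ) * R) R) ⊆ ball x₀ R \ ball x₀ ((1 - δ) * R) :=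
    fun x hx ↦ ⟨hx.2, not_lt.2 hx.1.le⟩
  grw [hshell, hu.lintegral_sobolevDensity_le hp hR.le]
  set M := R * (∫ x in ball x₀ R \ ball x₀ ((1 - δ) * R), frobNorm (Du x) ^ p) ^ (1 / p) +
    (∫ x in ball x₀ R \ ball x₀ ((1 - δ) * R), ‖u x‖ ^ p) ^ (1 / p)
  have hM : 0 ≤ M := by
    have : 0 ≤ ∫ x in ball x₀ R \ ball x₀ ((1 - δ) * R), frobNorm (Du x) ^ p :=
      integral_nonneg fun x ↦ Real.rpow_nonneg (frobNorm_nonneg _) p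
    positivity
  rw [ENNReal.ofReal_rpow_of_pos (by positivity), ← ENNReal.ofReal_coe_nnreal,
    ← ENNReal.ofReal_mul (by positivity), ← ENNReal.ofReal_mul (by positivity),
    ← ENNReal.ofReal_mul (by positivity)]
  refine ENNReal.ofReal_le_ofReal ?_
  calc 2 / (δ * R) * (A * (R ^ n * (δ * R)) ^ (t - 1 / p) * M)
      = 2 / (δ * R) * (R ^ n * (δ * R)) ^ (t - 1 / p) * A * M := by ring
    _ ≤ 2 / (δ * R) * (R ^ n * (δ * R)) ^ (t - 1 / p) * (A + 1) * M := by
        gcongr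
        exact le_add_of_nonneg_right zero_le_one
    _ = _ := by rw [annulus_scaling n hR hδ]; ring

end Estimate

theorem cutoff_with_optimal_integrability_general
    (N d m : ℕ) (p : ℝ) (q : ℝ≥0∞) (hp : 1 ≤ p)
    (hq : q ≠ 0)
    (hsub : p < (d : ℝ) - 1 → q ≤ ENNReal.ofReal (((d : ℝ) - 1) * p / ((d : ℝ) - 1 - p)))
    (hcrit : p = (d : ℝ) - 1 → q < ⊤) :
    ∃ C : ℝ, 0 < C ∧
      ∀ (x₀ : Euc d) (R : ℝ), 0 < R →
        ∀ (u : Fin N → Euc d → Euc m) (Du : Fin N → Euc d → Mat m d),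
          (∀ i, MemW1p (ball x₀ R) (ENNReal.ofReal p) (u i) (Du i)) →
          ∀ δ : ℝ, 0 < δ → δ ≤ 1 / 2 →
            ∃ (η : Euc d → ℝ) (Dη : Euc d → Euc d),
              (∀ x, 0 ≤ η x ∧ η x ≤ 1) ∧
              (∀ x ∈ ball x₀ ((1 - δ) * R), η x = 1) ∧
              (∀ x, x ∉ ball x₀ R → η x = 0) ∧
              LipschitzWith (Real.toNNReal (2 / (δ * R))) η ∧
              (∀ᵐ x ∂volume.restrict (ball x₀ R), HasGradientAt η (Dη x) x) ∧
              (∀ᵐ x ∂volume.restrict (ball x₀ R), ‖Dη x‖ ≤ 2 / (δ * R)) ∧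
              ∀ i, eLpNorm (fun x ↦ frobNorm (fun a b ↦ Dη x b * u i x a)) q
                    (volume.restrict (ball x₀ R)) ≤
                  ENNReal.ofReal
                    (C * R ^ ((d : ℝ) / q.toReal - (d : ℝ) / p - 1) /
                        δ ^ (1 + 1 / p - 1 / q.toReal) *
                      (R * (∫ x in ball x₀ R \ ball x₀ ((1 - δ) * R),
                              frobNorm (Du i x) ^ p) ^ (1 / p) +
                        (∫ x in ball x₀ R \ ball x₀ ((1 - δ) * R),
                            ‖u i x‖ ^ p) ^ (1 / p))) := by
  rcases d with _ | n
  · refine ⟨1, one_pos, fun x₀ R hR u Du _ δ hδ _ ↦ ⟨fun _ ↦ 1, fun _ ↦ 0, by norm_num,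
      fun _ _ ↦ rfl, fun x hx ↦ ?_, (LipschitzWith.const 1).weaken zero_le,
      .of_forall fun x ↦ hasGradientAt_const x 1, .of_forall fun x ↦ ?_, fun i ↦ ?_⟩⟩
    · exact absurd (Subsingleton.elim x₀ x ▸ mem_ball_self hR) hx
    · rw [norm_zero]
      positivity
    · simp [frobNorm]
  have hd : ((n + 1 : ℕ) : ℝ) = n + 1 := Nat.cast_succ n
  simp only [hd, add_sub_cancel_right] at hsub hcrit ⊢
  simp only [div_eq_mul_one_div ((n : ℝ) + 1)]
  obtain ⟨A, hA, hcutoff⟩ :=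
    (hasLocalSobolev_pi (F := Euc m) hp hq hsub hcrit).exists_isCutoff_eLpNorm_le hp (Fin N)
  lift A to ℝ≥0 using hA
  refine ⟨2 * (A + 1), by positivity, fun x₀ R hR u Du hu δ hδ hδ2 ↦ ?_⟩
  have hannulus (i) := (hu i).mono measurableSet_ball
    (sdiff_subset : ball x₀ R \ ball x₀ ((1 - δ) * R) ⊆ _)
  obtain ⟨η, Dη, hη, hbound⟩ := hcutoff x₀ ((1 - δ) * R) R (by nlinarith) (by nlinarith)
    (by nlinarith) u Du fun i ↦ (hannulus i).mono (measurableSet_ball.diff measurableSet_ball)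
      fun x hx ↦ ⟨hx.2, not_lt.2 hx.1.le⟩
  rw [show R - (1 - δ) * R = δ * R by ring] at hη hbound
  exact ⟨η, Dη, fun x ↦ ⟨hη.nonneg x, hη.le_one x⟩, hη.eq_one, hη.eq_zero, hη.lipschitzWith,
    ae_restrict_of_ae hη.hasGradientAt,
    ae_restrict_of_ae (hη.ae_norm_gradient_le (by positivity)), fun i ↦
      (eLpNorm_mono_measure _ Measure.restrict_le_self).trans <| (hbound i).trans <|
        (hannulus i).annulus_estimate hp hR hδ A _⟩

/-- **Lemma 3.1.** For exponents `p ≥ 1` and `q > p` with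
`q ≤ (d−1)p/(d−1−p)` if `p < d−1`, `q < ∞` if `p = d−1` and `q = ∞` if `p > d−1`, there is
`C = C(N,d,m,p,q)` such that for every ball `B_R(x₀)`, all `u_1, …, u_N ∈ W^{1,p}(B_R)^m`
and every `δ ∈ (0,1/2]` there is a cut-off `η ∈ W_0^{1,∞}(B_R)` with `0 ≤ η ≤ 1`, `η = 1`
on `B_{(1−δ)R}`, `‖∇η‖_∞ ≤ 2/(δR)` and
`‖∇η ⊗ u_i‖_{L^q(B_R)} ≤ C R^{d/q−d/p−1} δ^{−(1+1/p−1/q)} (R‖Du_i‖_{L^p(annulus)} +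
‖u_i‖_{L^p(annulus)})`, with the convention `d/∞ = 1/∞ = 0`. -/
theorem cutoff_with_optimal_integrability
    (N d m : ℕ) (p : ℝ) (q : ℝ≥0∞) (hp : 1 ≤ p)
    (hqp : ENNReal.ofReal p < q)
    (hq1 : p < (d : ℝ) - 1 → q ≤ ENNReal.ofReal (((d : ℝ) - 1) * p / ((d : ℝ) - 1 - p)))
    (hq2 : p = (d : ℝ) - 1 → q < ⊤)
    (hq3 : (d : ℝ) - 1 < p → q = ⊤) :
    ∃ C : ℝ, 0 < C ∧
      ∀ (x₀ : Euc d) (R : ℝ), 0 < R →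
        ∀ (u : Fin N → Euc d → Euc m) (Du : Fin N → Euc d → Mat m d),
          (∀ i, MemW1p (ball x₀ R) (ENNReal.ofReal p) (u i) (Du i)) →
          ∀ δ : ℝ, 0 < δ → δ ≤ 1 / 2 →
            ∃ (η : Euc d → ℝ) (Dη : Euc d → Euc d),
              (∀ x, 0 ≤ η x ∧ η x ≤ 1) ∧
              (∀ x ∈ ball x₀ ((1 - δ) * R), η x = 1) ∧
              (∀ x, x ∉ ball x₀ R → η x = 0) ∧
              LipschitzWith (Real.toNNReal (2 / (δ * R))) η ∧
              (∀ᵐ x ∂volume.restrict (ball x₀ R), HasGradientAt η (Dη x) x) ∧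
              (∀ᵐ x ∂volume.restrict (ball x₀ R), ‖Dη x‖ ≤ 2 / (δ * R)) ∧
              ∀ i, eLpNorm (fun x => frobNorm (fun a b => Dη x b * u i x a)) q
                    (volume.restrict (ball x₀ R)) ≤
                  ENNReal.ofReal
                    (C * R ^ ((d : ℝ) / q.toReal - (d : ℝ) / p - 1) /
                        δ ^ (1 + 1 / p - 1 / q.toReal) *
                      (R * (∫ x in ball x₀ R \ ball x₀ ((1 - δ) * R),
                              frobNorm (Du i x) ^ p) ^ (1 / p) +
                        (∫ x in ball x₀ R \ ball x₀ ((1 - δ) * R),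
                            ‖u i x‖ ^ p) ^ (1 / p))) := by
  exact cutoff_with_optimal_integrability_general N d m p q hp (pos_of_gt hqp).ne' hq1 hq2

end
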